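/- Let 0<p≤1 and let Y be a complex Banach space isomorphic to the complexification of a real Banach space. Then the quasi-Banach spaces H_p(𝔻,Y) and H_p(𝕋,Y) are isomorphic. -/

import Mathlib

/-!
Statement 12: Let `0 < p ≤ 1` and let `Y` be a complex Banach space isomorphic to the
complexification of a real Banach space. Then the quasi-Banach spaces `H_p(𝔻,Y)` and
`H_p(𝕋,Y)` are isomorphic.

`H_p(𝔻,Y)` consists of the analytic `F : 𝔻 → Y` with uniformly bounded `p`-means on circles;
`H_p(𝕋,Y)` consists of the `Y`-valued distributions `u` on the circle with
`sup_{0≤r<1}(∫_I (‖P_r*u‖^p + ‖Q_r*u‖^p))^{1/p} < ∞`. The regularity of `Y` is axiomatized by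
a bounded real-linear embedding `ι : X → Y` of a real Banach space `X` with bounded
real-linear projections `ReY, ImY` satisfying `y = ι(ReY y) + i·ι(ImY y)`.
-/

noncomputable section
open Filter Topology MeasureTheory ENNReal

def I₀ : Set ℝ := Set.Ico (-(1 : ℝ)/2) (1/2)

def circlePt (r t : ℝ) : ℂ := (r : ℂ) * Complex.exp (2 * Real.pi * t * Complex.I)

def poissonP (r t : ℝ) : ℝ :=
  (((1 : ℂ) + circlePt r t) / ((1 : ℂ) - circlePt r t)).re

def poissonQ (r t : ℝ) : ℝ :=
  (((1 : ℂ) + circlePt r t) / ((1 : ℂ) - circlePt r t)).im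

def Smooth1PeriodicC (g : ℝ → ℂ) : Prop := ContDiff ℝ (⊤ : ℕ∞) g ∧ ∀ t, g (t + 1) = g t

def testSeminormC (i : ℕ) (g : ℝ → ℂ) : ℝ :=
  ⨆ t : Set.Icc (0 : ℝ) 1, ‖iteratedDeriv i g t‖

def IsPeriodicDistributionC {Y : Type*} [NormedAddCommGroup Y] [NormedSpace ℂ Y]
    (u : (ℝ → ℂ) → Y) : Prop :=
  (∀ g h, Smooth1PeriodicC g → Smooth1PeriodicC h → u (g + h) = u g + u h) ∧
  (∀ (c : ℂ) (g), Smooth1PeriodicC g → u (c • g) = c • u g) ∧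
  ∃ (k : ℕ) (C : ℝ), ∀ g, Smooth1PeriodicC g →
    ‖u g‖ ≤ C * ∑ i ∈ Finset.range (k + 1), testSeminormC i g

def pConvC {Y : Type*} (u : (ℝ → ℂ) → Y) (r t : ℝ) : Y :=
  u (fun s => (poissonP r (t - s) : ℂ))

def qConvC {Y : Type*} (u : (ℝ → ℂ) → Y) (r t : ℝ) : Y :=
  u (fun s => (poissonQ r (t - s) : ℂ))

/-- The quasi-norm of `H_p(𝕋,Y)`. -/
def qHpT {Y : Type*} [NormedAddCommGroup Y] (p : ℝ) (u : (ℝ → ℂ) → Y) : ℝ≥0∞ :=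
  ⨆ r : Set.Ico (0 : ℝ) 1,
    (∫⁻ t in I₀, ((‖pConvC u r.1 t‖₊ : ℝ≥0∞) ^ p + (‖qConvC u r.1 t‖₊ : ℝ≥0∞) ^ p)) ^ (1/p)

def memHpT {Y : Type*} [NormedAddCommGroup Y] [NormedSpace ℂ Y] (p : ℝ)
    (u : (ℝ → ℂ) → Y) : Prop :=
  IsPeriodicDistributionC u ∧ qHpT p u < ⊤

def hpIntegral {Y : Type*} [NormedAddCommGroup Y] (p : ℝ) (F : ℂ → Y) (r : ℝ) : ℝ≥0∞ :=
  ∫⁻ t in I₀, (‖F (circlePt r t)‖₊ : ℝ≥0∞) ^ p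

def memHpD {Y : Type*} [NormedAddCommGroup Y] [NormedSpace ℂ Y] (p : ℝ) (F : ℂ → Y) : Prop :=
  DifferentiableOn ℂ F (Metric.ball 0 1) ∧
  ∃ B : ℝ≥0∞, B < ⊤ ∧ ∀ r : ℝ, 0 ≤ r → r < 1 → hpIntegral p F r ≤ B

def qHpD {Y : Type*} [NormedAddCommGroup Y] (p : ℝ) (F : ℂ → Y) : ℝ≥0∞ :=
  ⨆ r : Set.Ico (0 : ℝ) 1, (hpIntegral p F r.1) ^ (1/p)

/-!
Write the Taylor series of `F` as `F(z) = A(z²) + z B(z²)`, and let `u` be the distribution whose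
coefficients at the frequencies `0, -1, -2, …` are those of `A` and at `1, 2, …` are those of `B`.
Then `P_r * u = A(z) + z̄ B(z̄)` and `Q_r * u = -i (A(z) - A(0) - z̄ B(z̄))` for `z = r e^{2πit}`.
Hence `P_r * u`, `Q_r * u` and the constant `F(0)` are linear combinations of `A(z)`, `z̄ B(z̄)` and
`F(0)`, and conversely, while `A(z²)` and `z B(z²)` are the even and odd parts of `F`. As the
`p`-means are invariant under `z ↦ -z`, `z ↦ z̄` and `z ↦ z²`, all these functions have comparable
`p`-means, apart from the factor `z⁻¹` in `B(z²) = z⁻¹ (z B(z²))`, which is harmless away from `0`.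

Small radii, and the polynomial growth of the Taylor coefficients that makes `u` a distribution, are
controlled by bounding `(1 - |z|) |F(z)| ^ p` by the `p`-means of `F`. For `p ≤ 1` this follows from
Cauchy's formula at a point `z₀` maximizing `(R - |w|) |F(w)| ^ p`, on the circle
`|w| = (|z₀| + R) / 2`, where `|F|` is at most `2 ^ (1 / p) |F(z₀)|`; Jensen's inequality
reduces `p > 1` to `p = 1`.
-/

open Metric ComplexConjugate

section CirclePoints

/-- The point of the circle `{‖z‖ = r}` in the direction `x` of the compact group `ℝ/ℤ`. It is
`circlePt` with the angle taken modulo `1`, which makes the invariance properties of Haar measure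
available for the means `hpIntegral`. -/
def circlePoint (r : ℝ) (x : UnitAddCircle) : ℂ := r * x.toCircle

lemma circlePt_eq_circlePoint (r t : ℝ) : circlePt r t = circlePoint r (t : UnitAddCircle) := by
  simp [circlePt, circlePoint, AddCircle.toCircle_apply_mk, Circle.coe_exp]

lemma norm_circlePoint {r : ℝ} (hr : 0 ≤ r) (x : UnitAddCircle) : ‖circlePoint r x‖ = r := by
  rw [circlePoint, norm_mul, Circle.norm_coe, mul_one, Complex.norm_of_nonneg hr]

lemma circlePoint_mem_sphere {r : ℝ} (hr : 0 ≤ r) (x : UnitAddCircle) :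
    circlePoint r x ∈ sphere (0 : ℂ) r := by
  simp [norm_circlePoint hr]

lemma continuous_circlePoint (r : ℝ) : Continuous (circlePoint r) := by
  have := AddCircle.continuous_toCircle (T := (1 : ℝ))
  unfold circlePoint
  fun_prop

lemma circlePoint_sq (r : ℝ) (x : UnitAddCircle) :
    circlePoint r x ^ 2 = circlePoint (r ^ 2) (2 • x) := by
  simp [circlePoint, AddCircle.toCircle_nsmul, mul_pow]

lemma circlePoint_add_half (r : ℝ) (x : UnitAddCircle) :
    circlePoint r (x + ((1 / 2 : ℝ) : UnitAddCircle)) = -circlePoint r x := by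
  have half_turn : 2 * Real.pi / 1 * (1 / 2) = Real.pi := by ring
  rw [circlePoint, AddCircle.toCircle_add, AddCircle.toCircle_apply_mk, half_turn]
  simp [circlePoint, Circle.coe_exp]

lemma circlePoint_neg (r : ℝ) (x : UnitAddCircle) :
    circlePoint r (-x) = conj (circlePoint r x) := by
  rw [circlePoint, AddCircle.toCircle_neg, Circle.coe_inv_eq_conj]
  simp [circlePoint]

lemma lintegral_I₀_eq_lintegral_addCircle (f : UnitAddCircle → ℝ≥0∞) :
    ∫⁻ t in I₀, f t = ∫⁻ x, f x := by
  rw [I₀, restrict_Ico_eq_restrict_Ioc, ← UnitAddCircle.lintegral_preimage (-1 / 2)]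
  norm_num

lemma circleAverage_eq_integral_addCircle {E : Type*} [NormedAddCommGroup E] [NormedSpace ℝ E]
    (f : ℂ → E) (r : ℝ) :
    Real.circleAverage f 0 r = ∫ x : UnitAddCircle, f (circlePoint r x) := by
  rw [← UnitAddCircle.intervalIntegral_preimage 0, Real.circleAverage_def, zero_add,
    ← mul_one (2 * Real.pi), ← mul_zero (2 * Real.pi),
    ← intervalIntegral.smul_integral_comp_mul_left, smul_smul, mul_one,
    inv_mul_cancel₀ Real.two_pi_pos.ne', one_smul]
  simp [← circlePt_eq_circlePoint, circlePt, circleMap]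

end CirclePoints

section Means

variable {Y : Type*} [NormedAddCommGroup Y] {p r : ℝ} {F G H : ℂ → Y}

lemma hpIntegral_eq_lintegral_addCircle (p : ℝ) (F : ℂ → Y) (r : ℝ) :
    hpIntegral p F r = ∫⁻ x : UnitAddCircle, ‖F (circlePoint r x)‖ₑ ^ p := by
  rw [← lintegral_I₀_eq_lintegral_addCircle fun x ↦ ‖F (circlePoint r x)‖ₑ ^ p]
  simp only [hpIntegral, circlePt_eq_circlePoint, enorm_eq_nnnorm]

lemma continuous_comp_circlePoint (hr : 0 ≤ r) (hF : ContinuousOn F (sphere 0 r)) :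
    Continuous fun x ↦ F (circlePoint r x) :=
  hF.comp_continuous (continuous_circlePoint r) (circlePoint_mem_sphere hr)

lemma measurable_enorm_rpow_circlePoint (hr : 0 ≤ r) (hF : ContinuousOn F (sphere 0 r)) (p : ℝ) :
    Measurable fun x ↦ ‖F (circlePoint r x)‖ₑ ^ p :=
  (continuous_comp_circlePoint hr hF).enorm.measurable.pow_const p

lemma hpIntegral_const (p r : ℝ) (y : Y) : hpIntegral p (fun _ ↦ y) r = ‖y‖ₑ ^ p := by
  simp [hpIntegral_eq_lintegral_addCircle]

lemma hpIntegral_zero_radius (p : ℝ) (F : ℂ → Y) : hpIntegral p F 0 = ‖F 0‖ₑ ^ p := by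
  simp [hpIntegral_eq_lintegral_addCircle, circlePoint]

lemma hpIntegral_congr (hr : 0 ≤ r) (h : ∀ w ∈ sphere (0 : ℂ) r, F w = G w) :
    hpIntegral p F r = hpIntegral p G r := by
  simp only [hpIntegral_eq_lintegral_addCircle, h _ (circlePoint_mem_sphere hr _)]

lemma hpIntegral_comp_neg (p r : ℝ) (F : ℂ → Y) :
    hpIntegral p (fun w ↦ F (-w)) r = hpIntegral p F r := by
  simp only [hpIntegral_eq_lintegral_addCircle, ← circlePoint_add_half]
  exact lintegral_add_right_eq_self (fun x ↦ ‖F (circlePoint r x)‖ₑ ^ p) _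

lemma hpIntegral_comp_conj (p r : ℝ) (F : ℂ → Y) :
    hpIntegral p (fun w ↦ F (conj w)) r = hpIntegral p F r := by
  simp only [hpIntegral_eq_lintegral_addCircle, ← circlePoint_neg]
  exact lintegral_neg_eq_self (fun x ↦ ‖F (circlePoint r x)‖ₑ ^ p)

lemma hpIntegral_comp_sq (p r : ℝ) (hF : ContinuousOn F (sphere 0 (r ^ 2))) :
    hpIntegral p (fun w ↦ F (w ^ 2)) r = hpIntegral p F (r ^ 2) := by
  have doubling : MeasurePreserving fun x : UnitAddCircle ↦ 2 • x :=
    (AddCircle.ergodic_nsmul one_lt_two).toMeasurePreserving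
  simp only [hpIntegral_eq_lintegral_addCircle, circlePoint_sq]
  exact doubling.lintegral_comp (measurable_enorm_rpow_circlePoint (sq_nonneg r) hF p)

lemma hpIntegral_le_of_norm_le_mul_add {c : NNReal} {y : Y} (hp : 0 ≤ p) (hr : 0 ≤ r)
    (hG : ContinuousOn G (sphere 0 r))
    (h : ∀ w ∈ sphere (0 : ℂ) r, ‖F w‖ ≤ c * (‖G w‖ + ‖H w‖ + ‖y‖)) :
    hpIntegral p F r ≤ (3 * c) ^ p * (hpIntegral p G r + hpIntegral p H r + ‖y‖ₑ ^ p) := by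
  have enorm_le (w : ℂ) (hw : w ∈ sphere 0 r) :
      ‖F w‖ₑ ≤ 3 * c * max (max ‖G w‖ₑ ‖H w‖ₑ) ‖y‖ₑ := by
    have : ‖F w‖ₑ ≤ c * (‖G w‖ₑ + ‖H w‖ₑ + ‖y‖ₑ) := by
      simp only [enorm_eq_nnnorm]
      exact_mod_cast h w hw
    refine this.trans ?_
    rw [mul_comm 3, mul_assoc, ← two_add_one_eq_three, add_mul, two_mul, one_mul]
    gcongr <;> simp
  rw [← hpIntegral_const p r y]
  simp only [hpIntegral_eq_lintegral_addCircle]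
  have measurable_G := measurable_enorm_rpow_circlePoint hr hG p
  rw [← lintegral_add_left measurable_G, ← lintegral_add_right _ measurable_const,
    ← lintegral_const_mul' _ _ (by finiteness)]
  gcongr with x
  refine (rpow_le_rpow (enorm_le _ (circlePoint_mem_sphere hr x)) hp).trans ?_
  rw [mul_rpow_of_nonneg _ _ hp]
  simp only [(monotone_rpow_of_nonneg hp).map_max]
  gcongr
  exact max_le (max_le (le_self_add.trans le_self_add) (le_add_self.trans le_self_add)) le_add_self

lemma hpIntegral_sq_le_of_norm_comp_sq_le (hp : 0 < p) (hr : 0 ≤ r)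
    (hF : ContinuousOn F (sphere 0 r)) (hG : ContinuousOn G (sphere 0 (r ^ 2)))
    (h : ∀ w ∈ sphere (0 : ℂ) r, ‖G (w ^ 2)‖ ≤ ‖F w‖ + ‖F (-w)‖) :
    hpIntegral p G (r ^ 2) ≤ 3 ^ p * (2 * hpIntegral p F r) := by
  rw [← hpIntegral_comp_sq p r hG, two_mul]
  have := hpIntegral_le_of_norm_le_mul_add (c := 1) (H := fun w ↦ F (-w)) (y := (0 : Y)) hp.le hr
    hF fun w hw ↦ by simpa using h w hw
  simpa [hpIntegral_comp_neg, hp] using this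

end Means

section PointwiseBound

variable {Y : Type*} [NormedAddCommGroup Y] {p q ρ : ℝ} {F : ℂ → Y}

lemma hpIntegral_one_le_of_enorm_le {M : ℝ≥0∞} (hp : 0 ≤ p) (hp1 : p ≤ 1) (hρ : 0 ≤ ρ)
    (hM : M ≠ ⊤) (h : ∀ w ∈ sphere (0 : ℂ) ρ, ‖F w‖ₑ ≤ M) :
    hpIntegral 1 F ρ ≤ M ^ (1 - p) * hpIntegral p F ρ := by
  simp only [hpIntegral_eq_lintegral_addCircle]
  rw [← lintegral_const_mul' _ _ (rpow_ne_top_of_nonneg (sub_nonneg.2 hp1) hM)]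
  gcongr with x
  calc ‖F (circlePoint ρ x)‖ₑ ^ (1 : ℝ)
      = ‖F (circlePoint ρ x)‖ₑ ^ (1 - p) * ‖F (circlePoint ρ x)‖ₑ ^ p := by
        rw [← ENNReal.rpow_add_of_nonneg _ _ (sub_nonneg.2 hp1) hp, sub_add_cancel]
    _ ≤ M ^ (1 - p) * ‖F (circlePoint ρ x)‖ₑ ^ p := by
        gcongr
        exact h _ (circlePoint_mem_sphere hρ x)

lemma hpIntegral_le_rpow_of_exponent_le (hq : 0 < q) (hqp : q ≤ p) (hρ : 0 ≤ ρ)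
    (hF : ContinuousOn F (sphere 0 ρ)) :
    hpIntegral q F ρ ≤ hpIntegral p F ρ ^ (q / p) := by
  have : IsProbabilityMeasure (volume : Measure UnitAddCircle) := ⟨UnitAddCircle.measure_univ⟩
  have jensen := eLpNorm'_le_eLpNorm'_of_exponent_le hq hqp (volume : Measure UnitAddCircle)
    (continuous_comp_circlePoint hρ hF).aestronglyMeasurable
  simp only [eLpNorm', ← hpIntegral_eq_lintegral_addCircle] at jensen
  rwa [one_div, rpow_inv_le_iff hq, ← rpow_mul, one_div_mul_eq_div] at jensen

variable [NormedSpace ℂ Y] [CompleteSpace Y] {z : ℂ}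

lemma ofReal_sub_norm_mul_enorm_le_hpIntegral_one (hF : DiffContOnCl ℂ F (ball 0 ρ))
    (hz : ‖z‖ < ρ) :
    ENNReal.ofReal (ρ - ‖z‖) * ‖F z‖ₑ ≤ ENNReal.ofReal ρ * hpIntegral 1 F ρ := by
  have hρ : 0 < ρ := (norm_nonneg z).trans_lt hz
  have cauchy : F z = ∫ x : UnitAddCircle,
      (circlePoint ρ x / (circlePoint ρ x - z)) • F (circlePoint ρ x) := by
    rw [← circleAverage_eq_integral_addCircle fun w ↦ (w / (w - z)) • F w]
    rw [← abs_of_pos hρ] at hF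
    simpa using (hF.circleAverage_smul_div (by simpa [abs_of_pos hρ] using hz)).symm
  have kernel_le (x : UnitAddCircle) :
      ENNReal.ofReal (ρ - ‖z‖) * ‖circlePoint ρ x / (circlePoint ρ x - z)‖ₑ ≤
        ENNReal.ofReal ρ := by
    have le_norm_sub : ρ - ‖z‖ ≤ ‖circlePoint ρ x - z‖ := by
      simpa only [norm_circlePoint hρ.le] using norm_sub_norm_le (circlePoint ρ x) z
    rw [← ofReal_norm, ← ofReal_mul (sub_pos.2 hz).le, norm_div, norm_circlePoint hρ.le,
      mul_div_left_comm]
    gcongr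
    exact mul_le_of_le_one_right hρ.le (div_le_one_of_le₀ le_norm_sub (norm_nonneg _))
  rw [hpIntegral_eq_lintegral_addCircle, ← lintegral_const_mul' _ _ ofReal_ne_top, cauchy]
  refine (mul_le_mul_right (enorm_integral_le_lintegral_enorm _) _).trans ?_
  rw [← lintegral_const_mul' _ _ ofReal_ne_top]
  refine lintegral_mono fun x ↦ ?_
  rw [enorm_smul, ← mul_assoc, rpow_one]
  exact mul_le_mul_left (kernel_le x) _

lemma ofReal_sub_norm_mul_enorm_rpow_le_of_enorm_le_mul {c : ℝ≥0∞} (hp : 0 < p) (hp1 : p ≤ 1)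
    (hc : c ≠ ⊤) (hF : DiffContOnCl ℂ F (ball 0 ρ)) (hz : ‖z‖ < ρ)
    (h : ∀ w ∈ sphere (0 : ℂ) ρ, ‖F w‖ₑ ≤ c * ‖F z‖ₑ) :
    ENNReal.ofReal (ρ - ‖z‖) * ‖F z‖ₑ ^ p ≤
      ENNReal.ofReal ρ * (c ^ (1 - p) * hpIntegral p F ρ) := by
  rcases eq_or_ne (F z) 0 with hFz | hFz
  · simp [hFz, hp]
  have hρ : 0 ≤ ρ := (norm_nonneg z).trans hz.le
  have hp1' : 0 ≤ 1 - p := sub_nonneg.2 hp1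
  have scaled : ‖F z‖ₑ ^ (1 - p) * (ENNReal.ofReal (ρ - ‖z‖) * ‖F z‖ₑ ^ p) ≤
      ‖F z‖ₑ ^ (1 - p) * (ENNReal.ofReal ρ * (c ^ (1 - p) * hpIntegral p F ρ)) :=
    calc _ = ENNReal.ofReal (ρ - ‖z‖) * ‖F z‖ₑ := by
          rw [mul_left_comm, ← ENNReal.rpow_add_of_nonneg _ _ hp1' hp.le, sub_add_cancel, rpow_one]
      _ ≤ ENNReal.ofReal ρ * hpIntegral 1 F ρ :=
          ofReal_sub_norm_mul_enorm_le_hpIntegral_one hF hz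
      _ ≤ ENNReal.ofReal ρ * ((c * ‖F z‖ₑ) ^ (1 - p) * hpIntegral p F ρ) := by
          gcongr
          exact hpIntegral_one_le_of_enorm_le hp.le hp1 hρ (by finiteness) h
      _ = _ := by
          rw [mul_rpow_of_nonneg _ _ hp1']
          ring
  rwa [ENNReal.mul_le_mul_iff_right (by simp [hFz]) (by finiteness)] at scaled

lemma enorm_rpow_le_hpIntegral_of_forall_le {R : ℝ} {z₀ : ℂ} (hp : 0 < p) (hp1 : p ≤ 1)
    (hR : R < 1) (hF : DifferentiableOn ℂ F (ball 0 1)) (hz₀ : ‖z₀‖ < R)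
    (hmax : ∀ w ∈ closedBall (0 : ℂ) R,
      ENNReal.ofReal (R - ‖w‖) * ‖F w‖ₑ ^ p ≤ ENNReal.ofReal (R - ‖z₀‖) * ‖F z₀‖ₑ ^ p) :
    ENNReal.ofReal (R - ‖z₀‖) * ‖F z₀‖ₑ ^ p ≤
      2 ^ (1 / p) * hpIntegral p F ((‖z₀‖ + R) / 2) := by
  set ρ : ℝ := (‖z₀‖ + R) / 2 with hρ
  have hρR : ρ < R := by linarith
  have hρ1 : ρ < 1 := hρR.trans hR
  have gap : ENNReal.ofReal (R - ‖z₀‖) = 2 * ENNReal.ofReal (ρ - ‖z₀‖) := by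
    rw [← ofReal_ofNat 2, ← ofReal_mul zero_le_two]
    congr 1
    ring
  have gap_ne_zero : ENNReal.ofReal (ρ - ‖z₀‖) ≠ 0 := by
    simp only [ne_eq, ofReal_eq_zero]
    linarith
  have le_on_sphere : ∀ w ∈ sphere (0 : ℂ) ρ, ‖F w‖ₑ ≤ 2 ^ (1 / p) * ‖F z₀‖ₑ := by
    intro w hw
    rw [mem_sphere_zero_iff_norm] at hw
    have := hmax w (by simpa [hw] using hρR.le)
    rw [gap, hw, show R - ρ = ρ - ‖z₀‖ by ring, mul_comm 2, mul_assoc,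
      ENNReal.mul_le_mul_iff_right gap_ne_zero ofReal_ne_top] at this
    rwa [← rpow_le_rpow_iff hp, mul_rpow_of_nonneg _ _ hp.le, ← rpow_mul, one_div_mul_cancel hp.ne',
      rpow_one]
  have exponent_eq : 1 / p * (1 - p) = 1 / p - 1 := by field_simp
  calc _ = 2 * (ENNReal.ofReal (ρ - ‖z₀‖) * ‖F z₀‖ₑ ^ p) := by rw [gap, mul_assoc]
    _ ≤ 2 * (ENNReal.ofReal ρ * ((2 ^ (1 / p)) ^ (1 - p) * hpIntegral p F ρ)) := by
        gcongr 2 * ?_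
        exact ofReal_sub_norm_mul_enorm_rpow_le_of_enorm_le_mul hp hp1 (by finiteness)
          (hF.diffContOnCl_ball (closedBall_subset_ball hρ1)) (by linarith) le_on_sphere
    _ ≤ 2 * (1 * ((2 ^ (1 / p)) ^ (1 - p) * hpIntegral p F ρ)) := by
        gcongr
        exact ofReal_le_one.2 hρ1.le
    _ = 2 ^ (1 / p) * hpIntegral p F ρ := by
        rw [one_mul, ← rpow_mul, exponent_eq, ← mul_assoc, rpow_sub _ _ two_ne_zero ofNat_ne_top,
          rpow_one, ENNReal.mul_div_cancel two_ne_zero ofNat_ne_top]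

lemma enorm_rpow_le_of_hpIntegral_le_of_exponent_le_one {K : ℝ≥0∞} (hp : 0 < p) (hp1 : p ≤ 1)
    (hF : DifferentiableOn ℂ F (ball 0 1))
    (hK : ∀ ρ ∈ Set.Ico (1 / 4 : ℝ) 1, hpIntegral p F ρ ≤ K) (hz : ‖z‖ < 1) :
    ENNReal.ofReal (1 - ‖z‖) * ‖F z‖ₑ ^ p ≤ 2 * (2 ^ (1 / p) * K) := by
  set R : ℝ := (1 + ‖z‖) / 2 with hR
  have hR1 : R < 1 := by linarith
  have hzR : z ∈ closedBall 0 R := by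
    rw [mem_closedBall_zero_iff]
    linarith
  have cont : ContinuousOn (fun w ↦ ENNReal.ofReal (R - ‖w‖) * ‖F w‖ₑ ^ p) (closedBall 0 R) := by
    have hFR := hF.continuousOn.mono (closedBall_subset_ball hR1)
    have : ContinuousOn (fun w ↦ (R - ‖w‖) * ‖F w‖ ^ p) (closedBall 0 R) :=
      (continuous_const.sub continuous_norm).continuousOn.mul
        (hFR.norm.rpow_const fun _ _ ↦ Or.inr hp.le)
    refine (continuous_ofReal.comp_continuousOn this).congr fun w _ ↦ ?_
    simp only [Function.comp_apply, ofReal_mul' (Real.rpow_nonneg (norm_nonneg (F w)) p),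
      ← ofReal_rpow_of_nonneg (norm_nonneg (F w)) hp.le, ofReal_norm]
  obtain ⟨z₀, hz₀, hmax⟩ := (isCompact_closedBall (0 : ℂ) R).exists_isMaxOn ⟨z, hzR⟩ cont
  have half_gap : ENNReal.ofReal (1 - ‖z‖) = 2 * ENNReal.ofReal (R - ‖z‖) := by
    rw [← ofReal_ofNat 2, ← ofReal_mul zero_le_two]
    congr 1
    ring
  rw [half_gap, mul_assoc]
  gcongr 2 * ?_
  refine (hmax hzR).trans ?_
  rw [mem_closedBall_zero_iff] at hz₀
  rcases hz₀.eq_or_lt with boundary | interior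
  · simp [boundary]
  refine (enorm_rpow_le_hpIntegral_of_forall_le hp hp1 hR1 hF interior fun w hw ↦ hmax hw).trans ?_
  gcongr
  exact hK _ ⟨by linarith [norm_nonneg z₀, norm_nonneg z], by linarith⟩

variable (Y) in
lemma exists_enorm_rpow_le_of_hpIntegral_le (hp : 0 < p) :
    ∃ s : ℝ, 0 < s ∧ ∃ D : ℝ≥0∞, D ≠ ⊤ ∧ ∀ (F : ℂ → Y) (K : ℝ≥0∞),
      DifferentiableOn ℂ F (ball 0 1) → (∀ ρ ∈ Set.Ico (1 / 4 : ℝ) 1, hpIntegral p F ρ ≤ K) →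
        ∀ z : ℂ, ‖z‖ < 1 → ENNReal.ofReal (1 - ‖z‖) ^ s * ‖F z‖ₑ ^ p ≤ D * K := by
  set q := min p 1
  have hq : 0 < q := lt_min hp one_pos
  have hs : 0 < p / q := div_pos hp hq
  refine ⟨p / q, hs, (2 * 2 ^ (1 / q)) ^ (p / q), by finiteness, fun F K hF hK z hz ↦ ?_⟩
  have bound := enorm_rpow_le_of_hpIntegral_le_of_exponent_le_one (K := K ^ (q / p)) hq
    (min_le_right p 1) hF (fun ρ hρ ↦ ?_) hz
  · have := rpow_le_rpow bound hs.le
    rwa [← mul_assoc, mul_rpow_of_nonneg _ _ hs.le, mul_rpow_of_nonneg _ _ hs.le, ← rpow_mul,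
      ← rpow_mul, mul_div_cancel₀ _ hq.ne', div_mul_div_cancel₀ hp.ne', div_self hq.ne',
      rpow_one] at this
  · have hρ0 : 0 ≤ ρ := by linarith [hρ.1]
    refine (hpIntegral_le_rpow_of_exponent_le hq (min_le_left p 1) hρ0
      (hF.continuousOn.mono (sphere_subset_ball hρ.2))).trans ?_
    gcongr
    exact hK ρ hρ

variable (Y) in
lemma exists_hpIntegral_le_of_forall_quarter_le (hp : 0 < p) :
    ∃ E : ℝ≥0∞, E ≠ ⊤ ∧ ∀ (F : ℂ → Y) (K : ℝ≥0∞), DifferentiableOn ℂ F (ball 0 1) →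
      (∀ ρ ∈ Set.Ico (1 / 4 : ℝ) 1, hpIntegral p F ρ ≤ K) →
        ∀ r ∈ Set.Ico (0 : ℝ) 1, hpIntegral p F r ≤ E * K := by
  obtain ⟨s, hs, D, hD, bound⟩ := exists_enorm_rpow_le_of_hpIntegral_le Y hp
  set δ := ENNReal.ofReal (3 / 4) ^ s
  have hδ : δ ≠ 0 := by simp [δ]
  refine ⟨1 + D / δ, by finiteness, fun F K hF hK r hr ↦ ?_⟩
  rcases le_or_gt (1 / 4) r with far | near
  · exact (hK r ⟨far, hr.2⟩).trans (le_mul_of_one_le_left' le_self_add)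
  calc hpIntegral p F r ≤ ∫⁻ _ : UnitAddCircle, D * K / δ := by
        rw [hpIntegral_eq_lintegral_addCircle]
        gcongr with x
        rw [ENNReal.le_div_iff_mul_le (.inl hδ) (.inl (by finiteness)), mul_comm]
        refine le_trans ?_ (bound F K hF hK (circlePoint r x) ?_)
        all_goals rw [norm_circlePoint hr.1]
        · exact mul_le_mul_left (rpow_le_rpow (ofReal_le_ofReal (by linarith)) hs.le) _
        · exact hr.2
    _ = D / δ * K := by simp [div_eq_mul_inv, mul_right_comm]
    _ ≤ (1 + D / δ) * K := by gcongr; exact le_add_self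

lemma memHpD.exists_pow_mul_norm_le (hp : 0 < p) (hF : memHpD p F) :
    ∃ (N : ℕ) (C : ℝ), ∀ z : ℂ, ‖z‖ < 1 → (1 - ‖z‖) ^ N * ‖F z‖ ≤ C := by
  obtain ⟨hF, K, hK, hFK⟩ := hF
  obtain ⟨s, hs, D, hD, bound⟩ := exists_enorm_rpow_le_of_hpIntegral_le Y hp
  refine ⟨⌈s / p⌉₊, ((D * K) ^ (1 / p)).toReal, fun z hz ↦ ?_⟩
  have hz' : 0 ≤ 1 - ‖z‖ := sub_nonneg.2 hz.le
  have := bound F K hF (fun ρ hρ ↦ hFK ρ (by linarith [hρ.1]) hρ.2) z hz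
  calc (1 - ‖z‖) ^ ⌈s / p⌉₊ * ‖F z‖ ≤ (1 - ‖z‖) ^ (s / p) * ‖F z‖ := by
        gcongr
        rw [← Real.rpow_natCast]
        exact Real.rpow_le_rpow_of_exponent_ge' hz' (by simp) (div_pos hs hp).le (Nat.le_ceil _)
    _ = (ENNReal.ofReal (1 - ‖z‖) ^ (s / p) * ‖F z‖ₑ).toReal := by
        simp [hz', ← ENNReal.toReal_rpow]
    _ ≤ ((D * K) ^ (1 / p)).toReal := by
        refine ENNReal.toReal_mono (by finiteness) ?_
        rw [one_div, ENNReal.le_rpow_inv_iff hp, mul_rpow_of_nonneg _ _ hp.le, ← rpow_mul,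
          div_mul_cancel₀ _ hp.ne']
        exact this

end PointwiseBound

section PolynomialGrowth

variable {Y : Type*} [NormedAddCommGroup Y] [NormedSpace ℂ Y]

variable (Y) in
/-- The space of sequences `a` with `‖a n‖ = O((n + 1) ^ N)` for some `N`. These are at once the
Taylor coefficients of the functions in the spaces `H_p(𝔻,Y)` and, after reindexing by `ℤ`, the
Fourier coefficients of the `Y`-valued distributions on the circle. -/
def polyGrowth : Submodule ℂ (ℕ → Y) where
  carrier := {a | ∃ (N : ℕ) (C : ℝ), ∀ n : ℕ, ‖a n‖ ≤ C * (n + 1) ^ N}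
  zero_mem' := ⟨0, 0, by simp⟩
  add_mem' := by
    rintro a b ⟨N, C, ha⟩ ⟨M, D, hb⟩
    have hC : 0 ≤ C := (norm_nonneg _).trans (by simpa using ha 0)
    have hD : 0 ≤ D := (norm_nonneg _).trans (by simpa using hb 0)
    refine ⟨N + M, C + D, fun n ↦ (norm_add_le_of_le (ha n) (hb n)).trans ?_⟩
    rw [add_mul]
    gcongr <;> simp
  smul_mem' := by
    rintro c a ⟨N, C, ha⟩
    refine ⟨N, ‖c‖ * C, fun n ↦ ?_⟩
    rw [Pi.smul_apply, norm_smul, mul_assoc]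
    gcongr
    exact ha n

lemma polyGrowth_comp {a : ℕ → Y} (ha : a ∈ polyGrowth Y) {φ : ℕ → ℕ} {k : ℕ}
    (hφ : ∀ n, φ n + 1 ≤ k * (n + 1)) : a ∘ φ ∈ polyGrowth Y := by
  obtain ⟨N, C, ha⟩ := ha
  have hC : 0 ≤ C := (norm_nonneg _).trans (by simpa using ha 0)
  refine ⟨N, C * k ^ N, fun n ↦ (ha (φ n)).trans ?_⟩
  rw [mul_assoc, ← mul_pow]
  gcongr
  exact_mod_cast hφ n

lemma polyGrowth_comp_two_mul {a : ℕ → Y} (ha : a ∈ polyGrowth Y) :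
    (fun n ↦ a (2 * n)) ∈ polyGrowth Y :=
  polyGrowth_comp (k := 2) ha (by grind)

lemma polyGrowth_comp_two_mul_add_one {a : ℕ → Y} (ha : a ∈ polyGrowth Y) :
    (fun n ↦ a (2 * n + 1)) ∈ polyGrowth Y :=
  polyGrowth_comp (k := 2) ha (by grind)

lemma summable_pow_mul_norm {a : ℕ → Y} (ha : a ∈ polyGrowth Y) {r : ℝ} (hr : 0 ≤ r)
    (hr1 : r < 1) : Summable fun n ↦ ‖a n‖ * r ^ n := by
  obtain ⟨N, C, ha⟩ := ha
  have hC : 0 ≤ C := (norm_nonneg _).trans (by simpa using ha 0)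
  have majorant := (summable_descFactorial_mul_geometric_of_norm_lt_one N
    (r := r) (by rwa [Real.norm_of_nonneg hr])).mul_left C
  refine majorant.of_nonneg_of_le (fun n ↦ by positivity) fun n ↦ ?_
  rw [← mul_assoc]
  gcongr
  refine (ha n).trans ?_
  gcongr
  exact_mod_cast (by simpa [Nat.sub_add_comm] using Nat.pow_sub_le_descFactorial (n + N) N)

end PolynomialGrowth

section PowerSeries

variable {Y : Type*} [NormedAddCommGroup Y] [NormedSpace ℂ Y] {a : ℕ → Y} {z : ℂ}

/-- The sum `∑ zⁿ aₙ` of the power series with coefficients `a`. -/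
def powerSeriesSum (a : ℕ → Y) (z : ℂ) : Y := ∑' n, z ^ n • a n

lemma powerSeriesSum_zero (a : ℕ → Y) : powerSeriesSum a 0 = a 0 := by
  rw [powerSeriesSum, tsum_eq_single 0 fun n hn ↦ by simp [hn]]
  simp

variable [CompleteSpace Y]

lemma hasSum_powerSeriesSum (ha : a ∈ polyGrowth Y) (hz : ‖z‖ < 1) :
    HasSum (fun n ↦ z ^ n • a n) (powerSeriesSum a z) := by
  refine (Summable.of_norm ?_).hasSum
  simpa [norm_smul, mul_comm] using summable_pow_mul_norm ha (norm_nonneg z) hz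

lemma hasFPowerSeriesOnBall_powerSeriesSum (ha : a ∈ polyGrowth Y) :
    HasFPowerSeriesOnBall (powerSeriesSum a)
      (fun n ↦ ContinuousMultilinearMap.mkPiRing ℂ (Fin n) (a n)) 0 1 where
  r_le := ENNReal.le_of_forall_nnreal_lt fun r hr ↦
    FormalMultilinearSeries.le_radius_of_summable _ (by
      simpa using summable_pow_mul_norm ha r.2 (by exact_mod_cast hr))
  r_pos := one_pos
  hasSum := by
    intro z hz
    rw [← ofReal_one, eball_ofReal, mem_ball_zero_iff] at hz
    simpa using hasSum_powerSeriesSum ha hz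

lemma differentiableOn_powerSeriesSum (ha : a ∈ polyGrowth Y) :
    DifferentiableOn ℂ (powerSeriesSum a) (ball 0 1) := by
  simpa [← eball_ofReal] using (hasFPowerSeriesOnBall_powerSeriesSum ha).differentiableOn

lemma continuousOn_powerSeriesSum (ha : a ∈ polyGrowth Y) :
    ContinuousOn (powerSeriesSum a) (ball 0 1) :=
  (differentiableOn_powerSeriesSum ha).continuousOn

lemma polyGrowth_ext {b : ℕ → Y} (ha : a ∈ polyGrowth Y) (hb : b ∈ polyGrowth Y)
    (h : ∀ z ∈ ball (0 : ℂ) 1, powerSeriesSum a z = powerSeriesSum b z) : a = b := by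
  have := (hasFPowerSeriesOnBall_powerSeriesSum ha).hasFPowerSeriesAt
    |>.eq_formalMultilinearSeries_of_eventually
      (hasFPowerSeriesOnBall_powerSeriesSum hb).hasFPowerSeriesAt
      (eventually_of_mem (ball_mem_nhds 0 one_pos) h)
  funext n
  exact ContinuousMultilinearMap.mkPiRing_eq_iff.1 (congr_fun this n)

lemma powerSeriesSum_eq_even_add_odd (ha : a ∈ polyGrowth Y) (hz : ‖z‖ < 1) :
    powerSeriesSum a z = powerSeriesSum (fun n ↦ a (2 * n)) (z ^ 2) +
      z • powerSeriesSum (fun n ↦ a (2 * n + 1)) (z ^ 2) := by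
  have hz2 : ‖z ^ 2‖ < 1 := by simpa using pow_lt_one₀ (norm_nonneg z) hz two_ne_zero
  have even := hasSum_powerSeriesSum (polyGrowth_comp_two_mul ha) hz2
  have odd := (hasSum_powerSeriesSum (polyGrowth_comp_two_mul_add_one ha) hz2).const_smul z
  simp only [← pow_mul, smul_smul, ← pow_succ'] at even odd
  exact (hasSum_powerSeriesSum ha hz).unique (even.even_add_odd odd)

end PowerSeries

section TaylorCoefficients

variable {Y : Type*} [NormedAddCommGroup Y] [NormedSpace ℂ Y] [CompleteSpace Y] {F : ℂ → Y}

lemma taylorCoeff_mem_polyGrowth {N : ℕ} {C : ℝ} (hF : DifferentiableOn ℂ F (ball 0 1))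
    (hC : ∀ z : ℂ, ‖z‖ < 1 → (1 - ‖z‖) ^ N * ‖F z‖ ≤ C) :
    (fun n ↦ (n.factorial : ℂ)⁻¹ • iteratedDeriv n F 0) ∈ polyGrowth Y := by
  have hC₀ : 0 ≤ C := (norm_nonneg _).trans (by simpa using hC 0 (by simp))
  refine ⟨N + 1, 2 ^ N * C, fun n ↦ ?_⟩
  set R : ℝ := 1 - 1 / (n + 2) with hR
  have hR₀ : 0 < R := by rw [hR, sub_pos, div_lt_one] <;> linarith
  have hR₁ : R < 1 := sub_lt_self _ (by positivity)
  have bound_sphere : ∀ z ∈ sphere (0 : ℂ) R, ‖F z‖ ≤ C * (n + 2) ^ N := by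
    intro z hz
    rw [mem_sphere_zero_iff_norm] at hz
    have := hC z (by rwa [hz])
    rwa [hz, hR, _root_.sub_sub_cancel, one_div, inv_pow, inv_mul_le_iff₀ (by positivity),
      mul_comm] at this
  have bernoulli : 1 / (n + 1) ≤ R ^ n := by
    refine le_trans ?_ (one_add_mul_le_pow (a := -(1 / (n + 2) : ℝ)) ?_ n)
    · field_simp
      nlinarith
    · rw [neg_le_neg_iff, div_le_iff₀] <;> linarith
  have cauchy := Complex.norm_iteratedDeriv_le_of_forall_mem_sphere_norm_le n hR₀
    (hF.diffContOnCl_ball (closedBall_subset_ball hR₁)) bound_sphere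
  calc ‖(n.factorial : ℂ)⁻¹ • iteratedDeriv n F 0‖ ≤ C * (n + 2) ^ N / R ^ n := by
        rw [norm_smul, norm_inv, Complex.norm_natCast, inv_mul_le_iff₀ (by positivity),
          ← mul_div_assoc]
        exact cauchy
    _ ≤ C * (2 * (n + 1)) ^ N / (1 / (n + 1)) := by gcongr; linarith
    _ = 2 ^ N * C * (n + 1) ^ (N + 1) := by rw [mul_pow]; field_simp; ring

lemma exists_mem_polyGrowth_eq_powerSeriesSum {N : ℕ} {C : ℝ}
    (hF : DifferentiableOn ℂ F (ball 0 1))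
    (hC : ∀ z : ℂ, ‖z‖ < 1 → (1 - ‖z‖) ^ N * ‖F z‖ ≤ C) :
    ∃ a ∈ polyGrowth Y, ∀ z ∈ ball (0 : ℂ) 1, powerSeriesSum a z = F z := by
  refine ⟨_, taylorCoeff_mem_polyGrowth hF hC, fun z hz ↦ HasSum.tsum_eq ?_⟩
  convert Complex.hasSum_taylorSeries_on_ball hF hz using 2 with n
  rw [sub_zero, smul_comm]

end TaylorCoefficients

section Characters

/-- The character `t ↦ e^{2πint}` as a function on the line. -/
def circleChar (n : ℤ) (t : ℝ) : ℂ := fourier n (t : UnitAddCircle)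

lemma circleChar_zero : circleChar 0 = fun _ ↦ 1 := by
  ext t
  simp [circleChar]

lemma norm_circleChar (n : ℤ) (t : ℝ) : ‖circleChar n t‖ = 1 := Circle.norm_coe _

lemma hasDerivAt_circleChar (n : ℤ) (t : ℝ) :
    HasDerivAt (circleChar n) (2 * Real.pi * Complex.I * n * circleChar n t) t := by
  have := hasDerivAt_fourier 1 n t
  rwa [Complex.ofReal_one, div_one] at this

lemma norm_two_pi_I_mul (n : ℤ) : ‖2 * Real.pi * Complex.I * n‖ = 2 * Real.pi * |(n : ℝ)| := by
  simp [abs_of_pos Real.pi_pos]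

lemma circleChar_periodic (n : ℤ) : Function.Periodic (circleChar n) 1 := fun t ↦ by
  rw [circleChar, AddCircle.coe_add_period, circleChar]

lemma contDiff_circleChar (n : ℤ) : ContDiff ℝ (⊤ : ℕ∞) (circleChar n) := by
  have : circleChar n = fun t : ℝ ↦ Complex.exp (2 * Real.pi * Complex.I * n * t) := by
    ext t
    simp [circleChar]
  rw [this]
  exact (contDiff_const.mul Complex.ofRealCLM.contDiff).cexp

end Characters

section TestFunctions

/-- The space of smooth `1`-periodic functions, on which periodic distributions are linear. -/
def testFunctions : Submodule ℂ (ℝ → ℂ) where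
  carrier := {g | Smooth1PeriodicC g}
  zero_mem' := ⟨contDiff_const, fun _ ↦ rfl⟩
  add_mem' hg hh := ⟨hg.1.add hh.1, fun t ↦ congr_arg₂ (· + ·) (hg.2 t) (hh.2 t)⟩
  smul_mem' c _ hg := ⟨contDiff_const.smul hg.1, fun t ↦ congr_arg (c • ·) (hg.2 t)⟩

lemma circleChar_mem_testFunctions (n : ℤ) : circleChar n ∈ testFunctions :=
  ⟨contDiff_circleChar n, circleChar_periodic n⟩

variable {Y : Type*} [NormedAddCommGroup Y] [NormedSpace ℂ Y] {u : (ℝ → ℂ) → Y}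

namespace IsPeriodicDistributionC

/-- A distribution as a linear map; outside `testFunctions` the values of `u` carry no meaning. -/
def linearMap (hu : IsPeriodicDistributionC u) : testFunctions →ₗ[ℂ] Y where
  toFun g := u g
  map_add' g h := hu.1 g h g.2 h.2
  map_smul' c g := hu.2.1 c g g.2

lemma map_sum_smul (hu : IsPeriodicDistributionC u) {ι : Type*} (s : Finset ι) (c : ι → ℂ)
    {g : ι → ℝ → ℂ} (hg : ∀ i, g i ∈ testFunctions) :
    u (∑ i ∈ s, c i • g i) = ∑ i ∈ s, c i • u (g i) := by
  have := map_sum hu.linearMap (fun i ↦ c i • ⟨g i, hg i⟩) s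
  simp only [map_smul] at this
  simpa only [linearMap, LinearMap.coe_mk, AddHom.coe_mk, AddSubmonoidClass.coe_finsetSum,
    Submodule.coe_smul] using this

lemma map_sub (hu : IsPeriodicDistributionC u) {g h : ℝ → ℂ} (hg : g ∈ testFunctions)
    (hh : h ∈ testFunctions) : u (g - h) = u g - u h :=
  _root_.map_sub hu.linearMap ⟨g, hg⟩ ⟨h, hh⟩

end IsPeriodicDistributionC

end TestFunctions

section TrigonometricSeries

variable {ι : Type*} {c : ι → ℂ} {ν : ι → ℤ}

/-- The coefficients `c`, placed at the frequencies `ν`, decay faster than every power of the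
frequency. -/
def RapidlyDecaying (c : ι → ℂ) (ν : ι → ℤ) : Prop :=
  ∀ k : ℕ, Summable fun i ↦ ‖c i‖ * |(ν i : ℝ)| ^ k

/-- The trigonometric series `∑ cᵢ e^{2πi νᵢ t}`. -/
def trigSeries (c : ι → ℂ) (ν : ι → ℤ) (t : ℝ) : ℂ := ∑' i, c i * circleChar (ν i) t

lemma RapidlyDecaying.comp_injective (hc : RapidlyDecaying c ν) {κ : Type*} {φ : κ → ι}
    (hφ : φ.Injective) : RapidlyDecaying (c ∘ φ) (ν ∘ φ) :=
  fun k ↦ (hc k).comp_injective hφ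

lemma RapidlyDecaying.summable (hc : RapidlyDecaying c ν) (t : ℝ) :
    Summable fun i ↦ c i * circleChar (ν i) t :=
  .of_norm (by simpa only [norm_mul, norm_circleChar, pow_zero] using hc 0)

lemma RapidlyDecaying.deriv (hc : RapidlyDecaying c ν) :
    RapidlyDecaying (fun i ↦ 2 * Real.pi * Complex.I * ν i * c i) ν := fun k ↦
  ((hc (k + 1)).mul_left (2 * Real.pi)).congr fun i ↦ by
    rw [norm_mul, norm_two_pi_I_mul, pow_succ]
    ring

lemma RapidlyDecaying.hasDerivAt_trigSeries (hc : RapidlyDecaying c ν) (t : ℝ) :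
    HasDerivAt (trigSeries c ν)
      (trigSeries (fun i ↦ 2 * Real.pi * Complex.I * ν i * c i) ν t) t := by
  refine hasDerivAt_tsum (g := fun i s ↦ c i * circleChar (ν i) s)
    (g' := fun i s ↦ 2 * Real.pi * Complex.I * ν i * c i * circleChar (ν i) s)
    (by simpa only [pow_zero, mul_one] using hc.deriv 0) (fun i s ↦ ?_) (fun i s ↦ ?_)
    (hc.summable 0) t
  · exact ((hasDerivAt_circleChar (ν i) s).const_mul (c i)).congr_deriv (by ring)
  · rw [norm_mul, norm_circleChar, mul_one]

lemma RapidlyDecaying.iteratedDeriv_trigSeries (hc : RapidlyDecaying c ν) (k : ℕ) :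
    RapidlyDecaying (fun i ↦ (2 * Real.pi * Complex.I * ν i) ^ k * c i) ν ∧
      iteratedDeriv k (trigSeries c ν) =
        trigSeries (fun i ↦ (2 * Real.pi * Complex.I * ν i) ^ k * c i) ν := by
  induction k with
  | zero => simpa using hc
  | succ k ih =>
    simp only [pow_succ', mul_assoc _ (_ ^ k)]
    refine ⟨ih.1.deriv, ?_⟩
    rw [iteratedDeriv_succ, ih.2]
    exact funext fun t ↦ (ih.1.hasDerivAt_trigSeries t).deriv

lemma RapidlyDecaying.trigSeries_mem_testFunctions (hc : RapidlyDecaying c ν) :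
    trigSeries c ν ∈ testFunctions := by
  refine ⟨contDiff_of_differentiable_iteratedDeriv fun k _ ↦ ?_, fun t ↦ ?_⟩
  · obtain ⟨hck, deriv_eq⟩ := hc.iteratedDeriv_trigSeries k
    rw [deriv_eq]
    exact fun t ↦ (hck.hasDerivAt_trigSeries t).differentiableAt
  · simp only [trigSeries, circleChar_periodic _ t]

lemma RapidlyDecaying.testSeminormC_trigSeries_le (hc : RapidlyDecaying c ν) (k : ℕ) :
    testSeminormC k (trigSeries c ν) ≤ (2 * Real.pi) ^ k * ∑' i, ‖c i‖ * |(ν i : ℝ)| ^ k := by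
  rw [testSeminormC, (hc.iteratedDeriv_trigSeries k).2, ← tsum_mul_left]
  refine ciSup_le fun t ↦ ?_
  refine tsum_of_norm_bounded ((hc k).mul_left _).hasSum fun i ↦ le_of_eq ?_
  rw [norm_mul, norm_circleChar, norm_mul, norm_pow, norm_two_pi_I_mul, mul_pow]
  ring

lemma RapidlyDecaying.trigSeries_sub_sum (hc : RapidlyDecaying c ν) (s : Finset ι) :
    trigSeries c ν - ∑ i ∈ s, c i • circleChar (ν i) =
      trigSeries (fun i : {i // i ∉ s} ↦ c i) (fun i ↦ ν i) := by
  ext t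
  rw [Pi.sub_apply, trigSeries, ← (hc.summable t).sum_add_tsum_subtype_compl s, Finset.sum_apply]
  exact add_sub_cancel_left _ _

variable {Y : Type*} [NormedAddCommGroup Y] [NormedSpace ℂ Y] {u : (ℝ → ℂ) → Y}

lemma IsPeriodicDistributionC.hasSum_trigSeries (hu : IsPeriodicDistributionC u)
    (hc : RapidlyDecaying c ν) :
    HasSum (fun i ↦ c i • u (circleChar (ν i))) (u (trigSeries c ν)) := by
  obtain ⟨-, -, K, C, bound⟩ := id hu
  let tail (s : Finset ι) (k : ℕ) : ℝ := ∑' i : {i // i ∉ s}, ‖c i‖ * |(ν i : ℝ)| ^ k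
  have tail_tendsto : Tendsto (fun s ↦ |C| * ∑ k ∈ Finset.range (K + 1),
      (2 * Real.pi) ^ k * tail s k) atTop (𝓝 0) := by
    have (k : ℕ) : Tendsto (fun s ↦ tail s k) atTop (𝓝 0) :=
      _root_.tendsto_tsum_compl_atTop_zero fun i ↦ ‖c i‖ * |(ν i : ℝ)| ^ k
    simpa using (tendsto_finsetSum _ fun k _ ↦ (this k).const_mul ((2 * Real.pi) ^ k)).const_mul |C|
  have error_bound (s : Finset ι) : ‖u (trigSeries c ν) - ∑ i ∈ s, c i • u (circleChar (ν i))‖ ≤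
      |C| * ∑ k ∈ Finset.range (K + 1), (2 * Real.pi) ^ k * tail s k := by
    have hcs : RapidlyDecaying (fun i : {i // i ∉ s} ↦ c i) (fun i ↦ ν i) :=
      hc.comp_injective Subtype.val_injective
    rw [← hu.map_sum_smul s c fun i ↦ circleChar_mem_testFunctions (ν i),
      ← hu.map_sub hc.trigSeries_mem_testFunctions
        (Submodule.sum_mem _ fun i _ ↦ Submodule.smul_mem _ _ (circleChar_mem_testFunctions _)),
      hc.trigSeries_sub_sum]
    refine (bound _ hcs.trigSeries_mem_testFunctions).trans ?_
    gcongr with k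
    · exact Finset.sum_nonneg fun k _ ↦ Real.iSup_nonneg fun _ ↦ norm_nonneg _
    · exact le_abs_self C
    · exact hcs.testSeminormC_trigSeries_le k
  rw [HasSum, tendsto_iff_norm_sub_tendsto_zero]
  exact squeeze_zero (fun _ ↦ norm_nonneg _)
    (fun s ↦ (norm_sub_rev _ _).trans_le (error_bound s)) tail_tendsto

end TrigonometricSeries

section TestSeminorms

variable {g : ℝ → ℂ}

lemma testSeminormC_nonneg (k : ℕ) (g : ℝ → ℂ) : 0 ≤ testSeminormC k g :=
  Real.iSup_nonneg fun _ ↦ norm_nonneg _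

lemma testSeminormC_circleChar_le (k : ℕ) (n : ℤ) :
    testSeminormC k (circleChar n) ≤ (2 * Real.pi * |(n : ℝ)|) ^ k := by
  have hc : RapidlyDecaying (fun _ : Unit ↦ 1) (fun _ ↦ n) := fun k ↦ (hasSum_fintype _).summable
  have trigSeries_eq : trigSeries (fun _ : Unit ↦ 1) (fun _ ↦ n) = circleChar n := by
    ext t
    simp [trigSeries]
  simpa [trigSeries_eq, mul_pow] using hc.testSeminormC_trigSeries_le k

lemma deriv_mem_testFunctions (hg : g ∈ testFunctions) : deriv g ∈ testFunctions := by
  refine ⟨(contDiff_infty_iff_deriv.1 hg.1).2, fun t ↦ ?_⟩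
  rw [← deriv_comp_add_const, funext hg.2]

lemma iteratedDeriv_mem_testFunctions (hg : g ∈ testFunctions) (k : ℕ) :
    iteratedDeriv k g ∈ testFunctions := by
  induction k with
  | zero => rwa [iteratedDeriv_zero]
  | succ k ih => exact iteratedDeriv_succ (f := g) ▸ deriv_mem_testFunctions ih

lemma norm_iteratedDeriv_le_testSeminormC (hg : g ∈ testFunctions) (k : ℕ) {t : ℝ}
    (ht : t ∈ Set.Icc 0 1) : ‖iteratedDeriv k g t‖ ≤ testSeminormC k g := by
  have bdd := isCompact_Icc.bddAbove_image (K := Set.Icc (0 : ℝ) 1)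
    (iteratedDeriv_mem_testFunctions hg k).1.continuous.norm.continuousOn
  rw [Set.image_eq_range] at bdd
  exact le_ciSup bdd ⟨t, ht⟩

end TestSeminorms

section FourierCoefficients

variable {g : ℝ → ℂ}

/-- The `n`-th Fourier coefficient of a `1`-periodic function on the line. -/
def circleCoeff (g : ℝ → ℂ) (n : ℤ) : ℂ := ∫ t in (0 : ℝ)..1, circleChar (-n) t * g t

lemma circleCoeff_comp_coe (f : UnitAddCircle → ℂ) (n : ℤ) :
    circleCoeff (fun t ↦ f t) n = fourierCoeff f n := by
  simp [circleCoeff, circleChar, fourierCoeff_eq_intervalIntegral f n 0]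

lemma circleCoeff_circleChar (m n : ℤ) :
    circleCoeff (circleChar m) n = (Pi.single m 1 : ℤ → ℂ) n := by
  rw [← fourierCoeff_fourier (T := 1)]
  exact circleCoeff_comp_coe _ n

lemma circleCoeff_add {h : ℝ → ℂ} (hg : g ∈ testFunctions) (hh : h ∈ testFunctions) (n : ℤ) :
    circleCoeff (g + h) n = circleCoeff g n + circleCoeff h n := by
  simp only [circleCoeff, Pi.add_apply, mul_add]
  have hn := (contDiff_circleChar (-n)).continuous
  exact intervalIntegral.integral_add ((hn.mul hg.1.continuous).intervalIntegrable _ _)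
    ((hn.mul hh.1.continuous).intervalIntegrable _ _)

lemma circleCoeff_smul (c : ℂ) (g : ℝ → ℂ) (n : ℤ) :
    circleCoeff (c • g) n = c * circleCoeff g n := by
  simp only [circleCoeff, Pi.smul_apply, mul_smul_comm]
  exact intervalIntegral.integral_smul _ _

lemma circleCoeff_deriv (hg : g ∈ testFunctions) (n : ℤ) :
    circleCoeff (deriv g) n = 2 * Real.pi * Complex.I * n * circleCoeff g n := by
  have by_parts := intervalIntegral.integral_mul_deriv_eq_deriv_mul (a := 0) (b := 1)
    (fun t _ ↦ hasDerivAt_circleChar (-n) t)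
    (fun t _ ↦ (hg.1.differentiable (by simp) t).hasDerivAt)
    ((continuous_const.mul (contDiff_circleChar (-n)).continuous).intervalIntegrable _ _)
    ((deriv_mem_testFunctions hg).1.continuous.intervalIntegrable _ _)
  have boundary : circleChar (-n) 1 * g 1 = circleChar (-n) 0 * g 0 := by
    rw [← zero_add (1 : ℝ), circleChar_periodic, hg.2]
  rw [circleCoeff, by_parts, boundary, sub_self, zero_sub, ← intervalIntegral.integral_neg,
    circleCoeff, ← intervalIntegral.integral_const_mul]
  congr 1 with t
  push_cast
  ring

lemma circleCoeff_iteratedDeriv (hg : g ∈ testFunctions) (n : ℤ) (k : ℕ) :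
    circleCoeff (iteratedDeriv k g) n = (2 * Real.pi * Complex.I * n) ^ k * circleCoeff g n := by
  induction k with
  | zero => simp
  | succ k ih =>
    rw [iteratedDeriv_succ, circleCoeff_deriv (iteratedDeriv_mem_testFunctions hg k), ih, pow_succ',
      ← mul_assoc]

lemma abs_pow_mul_norm_circleCoeff_le (hg : g ∈ testFunctions) (n : ℤ) (k : ℕ) :
    |(n : ℝ)| ^ k * ‖circleCoeff g n‖ ≤ testSeminormC k g := by
  have two_pi_abs : |(n : ℝ)| ≤ 2 * Real.pi * |(n : ℝ)| :=
    le_mul_of_one_le_left (abs_nonneg _) (by linarith [Real.two_le_pi])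
  calc |(n : ℝ)| ^ k * ‖circleCoeff g n‖
      ≤ (2 * Real.pi * |(n : ℝ)|) ^ k * ‖circleCoeff g n‖ := by gcongr
    _ = ‖circleCoeff (iteratedDeriv k g) n‖ := by
        simp [circleCoeff_iteratedDeriv hg, abs_of_pos Real.pi_pos]
    _ ≤ testSeminormC k g * |1 - 0| := by
        refine intervalIntegral.norm_integral_le_of_norm_le_const fun t ht ↦ ?_
        rw [norm_mul, norm_circleChar, one_mul]
        rw [Set.uIoc_of_le zero_le_one] at ht
        exact norm_iteratedDeriv_le_testSeminormC hg k (Set.Ioc_subset_Icc_self ht)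
    _ = testSeminormC k g := by simp

lemma abs_add_one_pow_mul_norm_circleCoeff_le (hg : g ∈ testFunctions) (n : ℤ) (k : ℕ) :
    (|(n : ℝ)| + 1) ^ k * ‖circleCoeff g n‖ ≤
      2 ^ k * ∑ i ∈ Finset.range (k + 1), testSeminormC i g := by
  rw [add_pow, Finset.sum_mul, Finset.mul_sum]
  refine Finset.sum_le_sum fun i _ ↦ ?_
  rw [one_pow, mul_one, mul_right_comm, mul_comm]
  have := testSeminormC_nonneg i g
  gcongr
  · exact_mod_cast Nat.choose_le_two_pow k i
  · exact abs_pow_mul_norm_circleCoeff_le hg n i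

end FourierCoefficients

section Enumeration

/-- The enumeration `0, 1, -1, 2, -2, …` of the frequencies. The nonpositive ones sit at the even
places and the positive ones at the odd places, so that the even and the odd part of a power series
correspond to the two halves of a Fourier series. -/
def freq : ℕ ≃ ℤ := Equiv.intEquivNat.symm.trans (Equiv.neg ℤ)

lemma freq_two_mul (n : ℕ) : freq (2 * n) = -n :=
  freq.eq_symm_apply.1 (by cases n <;> rfl)

lemma freq_two_mul_add_one (n : ℕ) : freq (2 * n + 1) = n + 1 :=
  freq.eq_symm_apply.1 (by rfl)

lemma abs_freq_le (m : ℕ) : |(freq m : ℝ)| ≤ m := by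
  rcases m.even_or_odd' with ⟨n, rfl | rfl⟩
  · rw [freq_two_mul, Int.cast_neg, abs_neg, Int.cast_natCast, Nat.abs_cast]
    exact_mod_cast Nat.le_mul_of_pos_left n two_pos
  · rw [freq_two_mul_add_one, ← Nat.cast_succ, Int.cast_natCast, Nat.abs_cast]
    norm_cast
    linarith

lemma add_one_le_two_mul_abs_freq (m : ℕ) : (m + 1 : ℝ) ≤ 2 * (|(freq m : ℝ)| + 1) := by
  rcases m.even_or_odd' with ⟨n, rfl | rfl⟩
  · rw [freq_two_mul, Int.cast_neg, abs_neg, Int.cast_natCast, Nat.abs_cast]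
    norm_cast
    linarith
  · rw [freq_two_mul_add_one, Int.cast_add, Int.cast_natCast, Int.cast_one,
      abs_of_nonneg (by positivity)]
    push_cast
    linarith

lemma summable_inv_add_one_sq : Summable fun m : ℕ ↦ ((m + 1 : ℝ) ^ 2)⁻¹ := by
  exact_mod_cast (summable_nat_add_iff 1).2 (Real.summable_nat_pow_inv.2 one_lt_two)

variable {g : ℝ → ℂ}

lemma add_one_pow_mul_norm_circleCoeff_freq_le (hg : g ∈ testFunctions) (m k : ℕ) :
    (m + 1) ^ k * ‖circleCoeff g (freq m)‖ ≤
      4 ^ (k + 2) * (∑ i ∈ Finset.range (k + 3), testSeminormC i g) * ((m + 1 : ℝ) ^ 2)⁻¹ := by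
  rw [← div_eq_mul_inv, le_div_iff₀ (by positivity), mul_right_comm, ← pow_add]
  calc (m + 1) ^ (k + 2) * ‖circleCoeff g (freq m)‖
      ≤ (2 * (|(freq m : ℝ)| + 1)) ^ (k + 2) * ‖circleCoeff g (freq m)‖ := by
        gcongr
        exact add_one_le_two_mul_abs_freq m
    _ ≤ 2 ^ (k + 2) * (2 ^ (k + 2) * ∑ i ∈ Finset.range (k + 3), testSeminormC i g) := by
        rw [mul_pow, mul_assoc]
        exact mul_le_mul_of_nonneg_left (abs_add_one_pow_mul_norm_circleCoeff_le hg _ _)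
          (by positivity)
    _ = 4 ^ (k + 2) * ∑ i ∈ Finset.range (k + 3), testSeminormC i g := by
        rw [← mul_assoc, ← mul_pow]
        norm_num

lemma rapidlyDecaying_circleCoeff_freq (hg : g ∈ testFunctions) :
    RapidlyDecaying (fun m ↦ circleCoeff g (freq m)) freq := by
  intro k
  have majorant := summable_inv_add_one_sq.mul_left
    (4 ^ (k + 2) * ∑ i ∈ Finset.range (k + 3), testSeminormC i g)
  refine majorant.of_nonneg_of_le (fun m ↦ by positivity) fun m ↦ ?_
  refine le_trans ?_ (add_one_pow_mul_norm_circleCoeff_freq_le hg m k)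
  rw [mul_comm]
  gcongr
  exact (abs_freq_le m).trans (by simp)

lemma trigSeries_circleCoeff_freq (hg : g ∈ testFunctions) :
    trigSeries (fun m ↦ circleCoeff g (freq m)) freq = g := by
  let f : C(UnitAddCircle, ℂ) :=
    ⟨Function.Periodic.lift hg.2, continuous_coinduced_dom.2 hg.1.continuous⟩
  have coeff_f (n : ℤ) : fourierCoeff f n = circleCoeff g n := (circleCoeff_comp_coe f n).symm
  have summable_coeff : Summable (fourierCoeff f) := by
    refine freq.summable_iff.1 (.of_norm ?_)
    simpa [coeff_f, Function.comp_def] using rapidlyDecaying_circleCoeff_freq hg 0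
  ext t
  rw [trigSeries, freq.tsum_eq fun n ↦ circleCoeff g n * circleChar n t]
  have := has_pointwise_sum_fourier_series_of_summable summable_coeff t
  simp only [coeff_f, smul_eq_mul] at this
  exact this.tsum_eq

end Enumeration

section Coefficients

variable {Y : Type*} [NormedAddCommGroup Y] [NormedSpace ℂ Y] {u : (ℝ → ℂ) → Y}

/-- The Fourier coefficients of a distribution, in the order given by `freq`. -/
def distributionCoeff (u : (ℝ → ℂ) → Y) (m : ℕ) : Y := u (circleChar (freq m))

lemma IsPeriodicDistributionC.distributionCoeff_mem_polyGrowth (hu : IsPeriodicDistributionC u) :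
    distributionCoeff u ∈ polyGrowth Y := by
  obtain ⟨-, -, K, C, bound⟩ := hu
  have seminorm_le (m i : ℕ) (hi : i ∈ Finset.range (K + 1)) :
      testSeminormC i (circleChar (freq m)) ≤ (2 * Real.pi * (m + 1)) ^ K := by
    have pi_ge := Real.two_le_pi
    refine (testSeminormC_circleChar_le i (freq m)).trans ?_
    calc (2 * Real.pi * |(freq m : ℝ)|) ^ i ≤ (2 * Real.pi * (m + 1)) ^ i := by
          gcongr
          exact (abs_freq_le m).trans (by simp)
      _ ≤ (2 * Real.pi * (m + 1)) ^ K :=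
          pow_le_pow_right₀ (by nlinarith [m.cast_nonneg (α := ℝ)]) (by grind)
  refine ⟨K, |C| * ((K + 1) * (2 * Real.pi) ^ K), fun m ↦ ?_⟩
  refine (bound _ (circleChar_mem_testFunctions _)).trans ?_
  have sum_le := Finset.sum_le_card_nsmul _ _ _ (seminorm_le m)
  rw [Finset.card_range, nsmul_eq_mul, mul_pow, ← mul_assoc] at sum_le
  rw [mul_assoc |C|]
  refine mul_le_mul (le_abs_self C) (by exact_mod_cast sum_le)
    (Finset.sum_nonneg fun i _ ↦ testSeminormC_nonneg i _) (abs_nonneg C)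

lemma IsPeriodicDistributionC.apply_eq_tsum (hu : IsPeriodicDistributionC u) {g : ℝ → ℂ}
    (hg : g ∈ testFunctions) : u g = ∑' m, circleCoeff g (freq m) • distributionCoeff u m := by
  conv_lhs => rw [← trigSeries_circleCoeff_freq hg]
  exact (hu.hasSum_trigSeries (rapidlyDecaying_circleCoeff_freq hg)).tsum_eq.symm

end Coefficients

section DistributionOfCoefficients

variable {Y : Type*} [NormedAddCommGroup Y] [NormedSpace ℂ Y] {a : ℕ → Y} {g : ℝ → ℂ}

lemma exists_norm_circleCoeff_smul_le (ha : a ∈ polyGrowth Y) :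
    ∃ (N : ℕ) (C : ℝ), ∀ g ∈ testFunctions, ∀ m, ‖circleCoeff g (freq m) • a m‖ ≤
      (C * ∑ i ∈ Finset.range (N + 1), testSeminormC i g) * ((m + 1 : ℝ) ^ 2)⁻¹ := by
  obtain ⟨N, C, ha⟩ := ha
  have hC : 0 ≤ C := (norm_nonneg _).trans (by simpa using ha 0)
  refine ⟨N + 2, C * 4 ^ (N + 2), fun g hg m ↦ ?_⟩
  calc ‖circleCoeff g (freq m) • a m‖ ≤ ‖circleCoeff g (freq m)‖ * (C * (m + 1) ^ N) := by
        rw [norm_smul]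
        gcongr
        exact ha m
    _ = C * ((m + 1) ^ N * ‖circleCoeff g (freq m)‖) := by ring
    _ ≤ C * (4 ^ (N + 2) * (∑ i ∈ Finset.range (N + 3), testSeminormC i g) *
          ((m + 1 : ℝ) ^ 2)⁻¹) := by
        exact mul_le_mul_of_nonneg_left (add_one_pow_mul_norm_circleCoeff_freq_le hg m N) hC
    _ = _ := by ring

variable [CompleteSpace Y]

lemma summable_circleCoeff_smul (ha : a ∈ polyGrowth Y) (hg : g ∈ testFunctions) :
    Summable fun m ↦ circleCoeff g (freq m) • a m := by
  obtain ⟨N, C, bound⟩ := exists_norm_circleCoeff_smul_le ha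
  exact .of_norm_bounded (summable_inv_add_one_sq.mul_left _) (bound g hg)

/-- The distribution whose Fourier coefficients are a given sequence of polynomial growth, in the
order given by `freq`. Distributions are only meaningful on test functions; setting this one to
zero elsewhere, where the series need not converge, makes it depend linearly on the sequence. -/
def coeffDistribution : polyGrowth Y →ₗ[ℂ] ((ℝ → ℂ) → Y) where
  toFun a := (testFunctions : Set (ℝ → ℂ)).indicator fun g ↦ ∑' m, circleCoeff g (freq m) • a.1 m
  map_add' a b := by
    rw [← Set.indicator_add']
    refine Set.indicator_congr fun g hg ↦ ?_
    simpa using (summable_circleCoeff_smul a.2 hg).tsum_add (summable_circleCoeff_smul b.2 hg)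
  map_smul' c a := by
    refine Eq.trans ?_ (Set.indicator_const_smul _ c _)
    refine Set.indicator_congr fun g hg ↦ ?_
    simp only [Submodule.coe_smul, Pi.smul_apply, smul_comm _ c]
    exact (summable_circleCoeff_smul a.2 hg).tsum_const_smul c

lemma coeffDistribution_apply (a : polyGrowth Y) (hg : g ∈ testFunctions) :
    coeffDistribution a g = ∑' m, circleCoeff g (freq m) • a.1 m :=
  Set.indicator_of_mem (s := (testFunctions : Set (ℝ → ℂ))) hg
    fun g ↦ ∑' m, circleCoeff g (freq m) • a.1 m

lemma isPeriodicDistributionC_coeffDistribution (a : polyGrowth Y) :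
    IsPeriodicDistributionC (coeffDistribution a) := by
  refine ⟨fun g h hg hh ↦ ?_, fun c g hg ↦ ?_, ?_⟩
  · rw [coeffDistribution_apply a (add_mem (S := Submodule ℂ _) hg hh),
      coeffDistribution_apply a hg, coeffDistribution_apply a hh,
      ← (summable_circleCoeff_smul a.2 hg).tsum_add (summable_circleCoeff_smul a.2 hh)]
    simp only [circleCoeff_add hg hh, add_smul]
  · rw [coeffDistribution_apply a (testFunctions.smul_mem c hg), coeffDistribution_apply a hg,
      ← (summable_circleCoeff_smul a.2 hg).tsum_const_smul c]
    simp only [circleCoeff_smul, mul_smul]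
  · obtain ⟨N, C, bound⟩ := exists_norm_circleCoeff_smul_le a.2
    refine ⟨N, C * ∑' m : ℕ, ((m + 1 : ℝ) ^ 2)⁻¹, fun g hg ↦ ?_⟩
    rw [coeffDistribution_apply a hg, mul_right_comm, ← tsum_mul_left]
    exact tsum_of_norm_bounded (summable_inv_add_one_sq.mul_left _).hasSum (bound g hg)

lemma distributionCoeff_coeffDistribution (a : polyGrowth Y) :
    distributionCoeff (coeffDistribution a) = a := by
  ext m
  rw [distributionCoeff, coeffDistribution_apply a (circleChar_mem_testFunctions _),
    tsum_eq_single m fun k hk ↦ by simp [circleCoeff_circleChar, hk]]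
  simp [circleCoeff_circleChar]

end DistributionOfCoefficients

section GeometricKernels

variable {z : ℂ}

lemma circleChar_add_mul_natCast (m σ : ℤ) (n : ℕ) (t : ℝ) :
    circleChar (m + σ * n) t = circleChar m t * circleChar σ t ^ n := by
  rw [circleChar, fourier_add, mul_comm σ]
  simp only [circleChar, fourier_apply, mul_smul, natCast_zsmul, AddCircle.toCircle_nsmul,
    Circle.coe_pow]

lemma rapidlyDecaying_geometric (hz : ‖z‖ < 1) (m σ : ℤ) :
    RapidlyDecaying (fun n : ℕ ↦ z ^ n) (fun n ↦ m + σ * n) := fun k ↦ by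
  have poly : (fun n : ℕ ↦ ((|m| + |σ| * n : ℤ) : ℂ) ^ k) ∈ polyGrowth ℂ := by
    refine ⟨k, (|m| + |σ| : ℤ) ^ k, fun n ↦ ?_⟩
    rw [norm_pow, ← mul_pow, Complex.norm_intCast]
    push_cast
    gcongr
    rw [abs_of_nonneg (by positivity)]
    nlinarith [abs_nonneg (m : ℝ), abs_nonneg (σ : ℝ), n.cast_nonneg (α := ℝ)]
  refine (summable_pow_mul_norm poly (norm_nonneg z) hz).of_nonneg_of_le
    (fun n ↦ by positivity) fun n ↦ ?_
  have freq_le : |m + σ * n| ≤ |(|m| + |σ| * n)| :=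
    (abs_add_le m (σ * n)).trans (by simpa [abs_mul] using le_abs_self _)
  rw [mul_comm, norm_pow, norm_pow, Complex.norm_intCast]
  refine mul_le_mul_of_nonneg_right (pow_le_pow_left₀ (abs_nonneg _) ?_ k) (by positivity)
  exact_mod_cast freq_le

lemma trigSeries_geometric (hz : ‖z‖ < 1) (m σ : ℤ) (t : ℝ) :
    trigSeries (fun n : ℕ ↦ z ^ n) (fun n ↦ m + σ * n) t =
      circleChar m t * (1 - z * circleChar σ t)⁻¹ := by
  have ratio_lt : ‖z * circleChar σ t‖ < 1 := by rwa [norm_mul, norm_circleChar, mul_one]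
  rw [← tsum_geometric_of_norm_lt_one ratio_lt, ← tsum_mul_left]
  exact tsum_congr fun n ↦ by rw [circleChar_add_mul_natCast, mul_pow]; ring

end GeometricKernels

section PoissonKernels

lemma circlePt_sub (r t s : ℝ) : circlePt r (t - s) = circlePt r t * circleChar (-1) s := by
  rw [circlePt, circlePt, circleChar, fourier_coe_apply, mul_assoc (r : ℂ), ← Complex.exp_add]
  congr 2
  push_cast
  ring

lemma norm_circlePt {r : ℝ} (hr : 0 ≤ r) (t : ℝ) : ‖circlePt r t‖ = r := by
  rw [circlePt_eq_circlePoint, norm_circlePoint hr]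

lemma ofReal_re_cayley {w : ℂ} (hw : ‖w‖ < 1) :
    (((1 + w) / (1 - w)).re : ℂ) = (1 - w)⁻¹ + conj w * (1 - conj w)⁻¹ := by
  have hw₁ : 1 - w ≠ 0 := sub_ne_zero.2 (by rintro rfl; simp at hw)
  have hw₂ : 1 - conj w ≠ 0 := by simpa using (map_ne_zero (starRingEnd ℂ)).2 hw₁
  rw [Complex.re_eq_add_conj]
  simp only [map_div₀, map_add, map_sub, map_one]
  field_simp
  ring

lemma ofReal_im_cayley {w : ℂ} (hw : ‖w‖ < 1) :
    (((1 + w) / (1 - w)).im : ℂ) =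
      -Complex.I * ((1 - w)⁻¹ - 1 - conj w * (1 - conj w)⁻¹) := by
  have hw₁ : 1 - w ≠ 0 := sub_ne_zero.2 (by rintro rfl; simp at hw)
  have hw₂ : 1 - conj w ≠ 0 := by simpa using (map_ne_zero (starRingEnd ℂ)).2 hw₁
  rw [Complex.im_eq_sub_conj]
  simp only [map_div₀, map_add, map_sub, map_one]
  field_simp
  linear_combination 2 * (w - conj w) * Complex.I_sq

/-- The part `1 / (1 - w)`, `w = z e^{-2πis}`, of the Poisson kernel with nonpositive
frequencies. -/
def analyticKernel (z : ℂ) : ℝ → ℂ := trigSeries (fun n : ℕ ↦ z ^ n) (fun n ↦ 0 + -1 * n)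

/-- The part `w̄ / (1 - w̄)`, `w = z e^{-2πis}`, of the Poisson kernel with positive frequencies. -/
def antianalyticKernel (z : ℂ) : ℝ → ℂ :=
  conj z • trigSeries (fun n : ℕ ↦ conj z ^ n) (fun n ↦ 1 + 1 * n)

variable {z : ℂ}

lemma analyticKernel_mem_testFunctions (hz : ‖z‖ < 1) : analyticKernel z ∈ testFunctions :=
  (rapidlyDecaying_geometric hz 0 (-1)).trigSeries_mem_testFunctions

lemma antianalyticKernel_mem_testFunctions (hz : ‖z‖ < 1) :
    antianalyticKernel z ∈ testFunctions :=
  testFunctions.smul_mem _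
    (rapidlyDecaying_geometric (by simpa using hz) 1 1).trigSeries_mem_testFunctions

lemma analyticKernel_apply (hz : ‖z‖ < 1) (s : ℝ) :
    analyticKernel z s = (1 - z * circleChar (-1) s)⁻¹ := by
  rw [analyticKernel, trigSeries_geometric hz, circleChar_zero, one_mul]

lemma antianalyticKernel_apply (hz : ‖z‖ < 1) (s : ℝ) :
    antianalyticKernel z s =
      conj (z * circleChar (-1) s) * (1 - conj (z * circleChar (-1) s))⁻¹ := by
  have conj_char : conj (circleChar (-1) s) = circleChar 1 s := by
    simp only [circleChar, ← fourier_neg, neg_neg]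
  rw [antianalyticKernel, Pi.smul_apply, trigSeries_geometric (by simpa using hz), map_mul,
    conj_char, smul_eq_mul, mul_assoc]

variable {r : ℝ}

lemma poissonP_sub_eq (hr : 0 ≤ r) (hr1 : r < 1) (t : ℝ) :
    (fun s ↦ (poissonP r (t - s) : ℂ)) =
      analyticKernel (circlePt r t) + antianalyticKernel (circlePt r t) := by
  have hz : ‖circlePt r t‖ < 1 := by rwa [norm_circlePt hr]
  ext s
  rw [Pi.add_apply, analyticKernel_apply hz, antianalyticKernel_apply hz, ← circlePt_sub]
  exact ofReal_re_cayley (by rwa [norm_circlePt hr])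

lemma poissonQ_sub_eq (hr : 0 ≤ r) (hr1 : r < 1) (t : ℝ) :
    (fun s ↦ (poissonQ r (t - s) : ℂ)) = -Complex.I •
      (analyticKernel (circlePt r t) - circleChar 0 - antianalyticKernel (circlePt r t)) := by
  have hz : ‖circlePt r t‖ < 1 := by rwa [norm_circlePt hr]
  ext s
  rw [Pi.smul_apply, Pi.sub_apply, Pi.sub_apply, analyticKernel_apply hz,
    antianalyticKernel_apply hz, ← circlePt_sub, circleChar_zero]
  exact ofReal_im_cayley (by rwa [norm_circlePt hr])

end PoissonKernels

section PoissonConvolutions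

variable {Y : Type*} [NormedAddCommGroup Y] [NormedSpace ℂ Y]

/-- The power series built from the coefficients at even places, which `freq` assigns to the
nonpositive frequencies. -/
def evenSeries (a : ℕ → Y) (z : ℂ) : Y := powerSeriesSum (fun n ↦ a (2 * n)) z

/-- The power series without constant term built from the coefficients at odd places, which `freq`
assigns to the positive frequencies. -/
def oddSeries (a : ℕ → Y) (z : ℂ) : Y := z • powerSeriesSum (fun n ↦ a (2 * n + 1)) z

/-- The function `P_r * u` in the variable `z = r e^{2πit}`, in terms of the Fourier coefficients
`a` of `u`. -/
def poissonSeries (a : ℕ → Y) (z : ℂ) : Y := evenSeries a z + oddSeries a (conj z)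

/-- The function `Q_r * u` in the variable `z = r e^{2πit}`, in terms of the Fourier coefficients
`a` of `u`. -/
def conjPoissonSeries (a : ℕ → Y) (z : ℂ) : Y :=
  -Complex.I • (evenSeries a z - a 0 - oddSeries a (conj z))

variable {u : (ℝ → ℂ) → Y} {z : ℂ} {r : ℝ}

namespace IsPeriodicDistributionC

lemma apply_analyticKernel (hu : IsPeriodicDistributionC u) (hz : ‖z‖ < 1) :
    u (analyticKernel z) = evenSeries (distributionCoeff u) z := by
  rw [analyticKernel, ← (hu.hasSum_trigSeries (rapidlyDecaying_geometric hz 0 (-1))).tsum_eq]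
  simp [evenSeries, powerSeriesSum, distributionCoeff, freq_two_mul]

lemma apply_antianalyticKernel (hu : IsPeriodicDistributionC u) (hz : ‖z‖ < 1) :
    u (antianalyticKernel z) = oddSeries (distributionCoeff u) (conj z) := by
  have decay := rapidlyDecaying_geometric (z := conj z) (by simpa using hz) 1 1
  rw [antianalyticKernel, hu.2.1 _ _ decay.trigSeries_mem_testFunctions,
    ← (hu.hasSum_trigSeries decay).tsum_eq]
  simp [oddSeries, powerSeriesSum, distributionCoeff, freq_two_mul_add_one, add_comm (1 : ℤ)]

lemma pConvC_eq (hu : IsPeriodicDistributionC u) (hr : 0 ≤ r) (hr1 : r < 1) (t : ℝ) :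
    pConvC u r t = poissonSeries (distributionCoeff u) (circlePt r t) := by
  have hz : ‖circlePt r t‖ < 1 := by rwa [norm_circlePt hr]
  rw [pConvC, poissonP_sub_eq hr hr1, hu.1 _ _ (analyticKernel_mem_testFunctions hz)
    (antianalyticKernel_mem_testFunctions hz), hu.apply_analyticKernel hz,
    hu.apply_antianalyticKernel hz, poissonSeries]

lemma qConvC_eq (hu : IsPeriodicDistributionC u) (hr : 0 ≤ r) (hr1 : r < 1) (t : ℝ) :
    qConvC u r t = conjPoissonSeries (distributionCoeff u) (circlePt r t) := by
  have hz : ‖circlePt r t‖ < 1 := by rwa [norm_circlePt hr]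
  have h₁ := analyticKernel_mem_testFunctions hz
  have h₂ := circleChar_mem_testFunctions 0
  have h₃ := antianalyticKernel_mem_testFunctions hz
  rw [qConvC, poissonQ_sub_eq hr hr1, hu.2.1 _ _ (sub_mem (sub_mem h₁ h₂) h₃),
    hu.map_sub (sub_mem h₁ h₂) h₃, hu.map_sub h₁ h₂, hu.apply_analyticKernel hz,
    hu.apply_antianalyticKernel hz]
  have freq_zero : freq 0 = 0 := freq_two_mul 0
  rw [conjPoissonSeries, distributionCoeff, freq_zero]

end IsPeriodicDistributionC

end PoissonConvolutions

section PoissonSeries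

variable {Y : Type*} [NormedAddCommGroup Y] [NormedSpace ℂ Y]

lemma poissonSeries_zero (a : ℕ → Y) : poissonSeries a 0 = a 0 := by
  simp [poissonSeries, evenSeries, oddSeries, powerSeriesSum_zero]

lemma norm_poissonSeries_le (a : ℕ → Y) (z : ℂ) :
    ‖poissonSeries a z‖ ≤ ‖evenSeries a z‖ + ‖oddSeries a (conj z)‖ :=
  norm_add_le _ _

lemma norm_conjPoissonSeries_le (a : ℕ → Y) (z : ℂ) :
    ‖conjPoissonSeries a z‖ ≤ ‖evenSeries a z‖ + ‖oddSeries a (conj z)‖ + ‖a 0‖ := by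
  rw [conjPoissonSeries, norm_smul, norm_neg, Complex.norm_I, one_mul, add_right_comm]
  exact norm_sub_le_of_le (norm_sub_le _ _) le_rfl

lemma norm_inv_two_smul_add_smul_I_add_le (x y z : Y) :
    ‖(2 : ℂ)⁻¹ • (x + Complex.I • y + z)‖ ≤ ‖x‖ + ‖y‖ + ‖z‖ := by
  have triangle := norm_add₃_le (a := x) (b := Complex.I • y) (c := z)
  rw [norm_smul Complex.I, Complex.norm_I, one_mul] at triangle
  rw [norm_smul, norm_inv, Complex.norm_two]
  exact (mul_le_of_le_one_left (norm_nonneg _) (by norm_num)).trans triangle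

lemma norm_evenSeries_le (a : ℕ → Y) (z : ℂ) :
    ‖evenSeries a z‖ ≤ ‖poissonSeries a z‖ + ‖conjPoissonSeries a z‖ + ‖a 0‖ := by
  convert norm_inv_two_smul_add_smul_I_add_le (poissonSeries a z) (conjPoissonSeries a z) (a 0)
  rw [poissonSeries, conjPoissonSeries, smul_smul, mul_neg, Complex.I_mul_I]
  module

lemma norm_oddSeries_conj_le (a : ℕ → Y) (z : ℂ) :
    ‖oddSeries a (conj z)‖ ≤ ‖poissonSeries a z‖ + ‖conjPoissonSeries a z‖ + ‖a 0‖ := by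
  rw [← norm_neg (conjPoissonSeries a z), ← norm_neg (a 0)]
  convert norm_inv_two_smul_add_smul_I_add_le (poissonSeries a z) (-conjPoissonSeries a z) (-a 0)
  rw [poissonSeries, conjPoissonSeries, smul_neg, smul_smul, mul_neg, Complex.I_mul_I]
  module

end PoissonSeries

section ParityDecomposition

variable {Y : Type*} [NormedAddCommGroup Y] [NormedSpace ℂ Y] [CompleteSpace Y] {a : ℕ → Y}
  {z : ℂ}

lemma continuousOn_evenSeries (ha : a ∈ polyGrowth Y) :
    ContinuousOn (evenSeries a) (ball 0 1) :=
  continuousOn_powerSeriesSum (polyGrowth_comp_two_mul ha)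

lemma continuousOn_oddSeries (ha : a ∈ polyGrowth Y) : ContinuousOn (oddSeries a) (ball 0 1) :=
  continuousOn_id.smul (continuousOn_powerSeriesSum (polyGrowth_comp_two_mul_add_one ha))

lemma continuousOn_poissonSeries (ha : a ∈ polyGrowth Y) :
    ContinuousOn (poissonSeries a) (ball 0 1) := by
  refine (continuousOn_evenSeries ha).add ((continuousOn_oddSeries ha).comp (by fun_prop) ?_)
  simp [Set.MapsTo]

lemma norm_evenSeries_sq_le (ha : a ∈ polyGrowth Y) (hz : ‖z‖ < 1) :
    ‖evenSeries a (z ^ 2)‖ ≤ ‖powerSeriesSum a z‖ + ‖powerSeriesSum a (-z)‖ := by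
  have even_part : evenSeries a (z ^ 2) =
      (2 : ℂ)⁻¹ • (powerSeriesSum a z + powerSeriesSum a (-z)) := by
    rw [powerSeriesSum_eq_even_add_odd ha hz,
      powerSeriesSum_eq_even_add_odd ha (by rwa [norm_neg]), neg_sq, evenSeries]
    module
  rw [even_part, norm_smul]
  refine (mul_le_of_le_one_left (norm_nonneg _) ?_).trans (norm_add_le _ _)
  norm_num

lemma norm_oddSeries_sq_le (ha : a ∈ polyGrowth Y) (hz : ‖z‖ < 1) :
    ‖oddSeries a (z ^ 2)‖ ≤ ‖powerSeriesSum a z‖ + ‖powerSeriesSum a (-z)‖ := by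
  have odd_part : oddSeries a (z ^ 2) =
      (z / 2) • (powerSeriesSum a z - powerSeriesSum a (-z)) := by
    rw [powerSeriesSum_eq_even_add_odd ha hz,
      powerSeriesSum_eq_even_add_odd ha (by rwa [norm_neg]), neg_sq, oddSeries]
    module
  rw [odd_part, norm_smul]
  refine (mul_le_of_le_one_left (norm_nonneg _) ?_).trans (norm_sub_le _ _)
  rw [norm_div, Complex.norm_two]
  linarith

lemma norm_powerSeriesSum_le (ha : a ∈ polyGrowth Y) (hz : ‖z‖ < 1) (hz₀ : 1 / 4 ≤ ‖z‖) :
    ‖powerSeriesSum a z‖ ≤ 4 * (‖evenSeries a (z ^ 2)‖ + ‖oddSeries a (z ^ 2)‖) := by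
  have z_ne_zero : z ≠ 0 := norm_pos_iff.1 (by linarith)
  have splitting : powerSeriesSum a z = evenSeries a (z ^ 2) + z⁻¹ • oddSeries a (z ^ 2) := by
    rw [powerSeriesSum_eq_even_add_odd ha hz, evenSeries, oddSeries, smul_smul, sq,
      inv_mul_cancel_left₀ z_ne_zero]
  have inv_le : ‖z‖⁻¹ ≤ 4 := by simpa using inv_anti₀ (by norm_num) hz₀
  rw [splitting, mul_add]
  refine norm_add_le_of_le (le_mul_of_one_le_left (norm_nonneg _) (by norm_num)) ?_
  rw [norm_smul, norm_inv]
  gcongr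

end ParityDecomposition

section MeanComparison

variable {Y : Type*} [NormedAddCommGroup Y] [NormedSpace ℂ Y] [CompleteSpace Y] {a : ℕ → Y}
  {p r : ℝ} {κ : ℝ≥0∞}

lemma hpIntegral_evenSeries_sq_le (ha : a ∈ polyGrowth Y) (hp : 0 < p) (hr : 0 ≤ r)
    (hr1 : r < 1) :
    hpIntegral p (evenSeries a) (r ^ 2) ≤ 3 ^ p * (2 * hpIntegral p (powerSeriesSum a) r) :=
  hpIntegral_sq_le_of_norm_comp_sq_le hp hr
    ((continuousOn_powerSeriesSum ha).mono (sphere_subset_ball hr1))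
    ((continuousOn_evenSeries ha).mono (sphere_subset_ball (pow_lt_one₀ hr hr1 two_ne_zero)))
    fun _ hw ↦ norm_evenSeries_sq_le ha ((mem_sphere_zero_iff_norm.1 hw).trans_lt hr1)

lemma hpIntegral_oddSeries_sq_le (ha : a ∈ polyGrowth Y) (hp : 0 < p) (hr : 0 ≤ r)
    (hr1 : r < 1) :
    hpIntegral p (oddSeries a) (r ^ 2) ≤ 3 ^ p * (2 * hpIntegral p (powerSeriesSum a) r) :=
  hpIntegral_sq_le_of_norm_comp_sq_le hp hr
    ((continuousOn_powerSeriesSum ha).mono (sphere_subset_ball hr1))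
    ((continuousOn_oddSeries ha).mono (sphere_subset_ball (pow_lt_one₀ hr hr1 two_ne_zero)))
    fun _ hw ↦ norm_oddSeries_sq_le ha ((mem_sphere_zero_iff_norm.1 hw).trans_lt hr1)

lemma hpIntegral_powerSeriesSum_le (ha : a ∈ polyGrowth Y) (hp : 0 < p) (hr : 1 / 4 ≤ r)
    (hr1 : r < 1) : hpIntegral p (powerSeriesSum a) r ≤
      12 ^ p * (hpIntegral p (evenSeries a) (r ^ 2) + hpIntegral p (oddSeries a) (r ^ 2)) := by
  have hr₀ : 0 ≤ r := by linarith
  have sphere_subset : sphere (0 : ℂ) (r ^ 2) ⊆ ball 0 1 :=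
    sphere_subset_ball (pow_lt_one₀ hr₀ hr1 two_ne_zero)
  have continuous_even := (continuousOn_evenSeries ha).mono sphere_subset
  rw [← hpIntegral_comp_sq p r continuous_even,
    ← hpIntegral_comp_sq p r ((continuousOn_oddSeries ha).mono sphere_subset)]
  have := hpIntegral_le_of_norm_le_mul_add (c := 4) (F := powerSeriesSum a)
    (G := fun w ↦ evenSeries a (w ^ 2)) (H := fun w ↦ oddSeries a (w ^ 2)) (y := (0 : Y)) hp.le hr₀
    (continuous_even.comp (by fun_prop) fun w hw ↦ by simp_all) fun w hw ↦ by
      rw [mem_sphere_zero_iff_norm] at hw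
      simpa using norm_powerSeriesSum_le ha (hw.trans_lt hr1) (hr.trans_eq hw.symm)
  have three_mul_four : (3 * 4 : ℝ≥0∞) = 12 := by norm_num
  simpa [three_mul_four, hp] using this

lemma hpIntegral_poissonSeries_le (ha : a ∈ polyGrowth Y) (hp : 0 ≤ p) (hr : 0 ≤ r)
    (hr1 : r < 1) : hpIntegral p (poissonSeries a) r ≤
      3 ^ p * (hpIntegral p (evenSeries a) r + hpIntegral p (oddSeries a) r + ‖a 0‖ₑ ^ p) := by
  have := hpIntegral_le_of_norm_le_mul_add (c := 1) (H := fun w ↦ oddSeries a (conj w)) (y := a 0)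
    hp hr ((continuousOn_evenSeries ha).mono (sphere_subset_ball hr1)) fun w _ ↦ by
      simpa using le_add_of_le_of_nonneg (norm_poissonSeries_le a w) (norm_nonneg (a 0))
  simpa [hpIntegral_comp_conj] using this

lemma hpIntegral_conjPoissonSeries_le (ha : a ∈ polyGrowth Y) (hp : 0 ≤ p) (hr : 0 ≤ r)
    (hr1 : r < 1) : hpIntegral p (conjPoissonSeries a) r ≤
      3 ^ p * (hpIntegral p (evenSeries a) r + hpIntegral p (oddSeries a) r + ‖a 0‖ₑ ^ p) := by
  have := hpIntegral_le_of_norm_le_mul_add (c := 1) (H := fun w ↦ oddSeries a (conj w)) (y := a 0)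
    hp hr ((continuousOn_evenSeries ha).mono (sphere_subset_ball hr1)) fun w _ ↦ by
      simpa using norm_conjPoissonSeries_le a w
  simpa [hpIntegral_comp_conj] using this

lemma hpIntegral_evenSeries_le (ha : a ∈ polyGrowth Y) (hp : 0 ≤ p) (hr : 0 ≤ r)
    (hr1 : r < 1) : hpIntegral p (evenSeries a) r ≤ 3 ^ p *
      (hpIntegral p (poissonSeries a) r + hpIntegral p (conjPoissonSeries a) r + ‖a 0‖ₑ ^ p) := by
  have := hpIntegral_le_of_norm_le_mul_add (c := 1) (y := a 0) hp hr
    ((continuousOn_poissonSeries ha).mono (sphere_subset_ball hr1)) fun w _ ↦ by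
      simpa using norm_evenSeries_le a w
  simpa using this

lemma hpIntegral_oddSeries_le (ha : a ∈ polyGrowth Y) (hp : 0 ≤ p) (hr : 0 ≤ r)
    (hr1 : r < 1) : hpIntegral p (oddSeries a) r ≤ 3 ^ p *
      (hpIntegral p (poissonSeries a) r + hpIntegral p (conjPoissonSeries a) r + ‖a 0‖ₑ ^ p) := by
  have := hpIntegral_le_of_norm_le_mul_add (c := 1) (F := fun w ↦ oddSeries a (conj w)) (y := a 0)
    hp hr ((continuousOn_poissonSeries ha).mono (sphere_subset_ball hr1)) fun w _ ↦ by
      simpa using norm_oddSeries_conj_le a w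
  simpa [hpIntegral_comp_conj] using this

lemma hpIntegral_poissonSeries_add_le_of_forall_le (ha : a ∈ polyGrowth Y) (hp : 0 < p)
    (hκ : ∀ ρ ∈ Set.Ico (0 : ℝ) 1, hpIntegral p (powerSeriesSum a) ρ ≤ κ) (hr : 0 ≤ r)
    (hr1 : r < 1) : hpIntegral p (poissonSeries a) r + hpIntegral p (conjPoissonSeries a) r ≤
      2 * 3 ^ p * (4 * 3 ^ p + 1) * κ := by
  obtain ⟨ρ, hρ, rfl⟩ : ∃ ρ, 0 ≤ ρ ∧ ρ ^ 2 = r := ⟨√r, Real.sqrt_nonneg r, Real.sq_sqrt hr⟩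
  have hρ1 : ρ < 1 := (sq_lt_one_iff₀ hρ).1 hr1
  have mean_le := hκ ρ ⟨hρ, hρ1⟩
  have constant_term_le : ‖a 0‖ₑ ^ p ≤ κ := by
    simpa [hpIntegral_zero_radius, powerSeriesSum_zero] using hκ 0 (by simp)
  calc _ ≤ 2 * (3 ^ p * (hpIntegral p (evenSeries a) (ρ ^ 2) + hpIntegral p (oddSeries a) (ρ ^ 2) +
        ‖a 0‖ₑ ^ p)) := by
        rw [two_mul]
        exact add_le_add (hpIntegral_poissonSeries_le ha hp.le hr hr1)
          (hpIntegral_conjPoissonSeries_le ha hp.le hr hr1)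
    _ ≤ 2 * (3 ^ p * (3 ^ p * (2 * κ) + 3 ^ p * (2 * κ) + κ)) := by
        gcongr
        · exact (hpIntegral_evenSeries_sq_le ha hp hρ hρ1).trans (by gcongr)
        · exact (hpIntegral_oddSeries_sq_le ha hp hρ hρ1).trans (by gcongr)
    _ = _ := by ring

lemma hpIntegral_powerSeriesSum_le_of_forall_le (ha : a ∈ polyGrowth Y) (hp : 0 < p)
    (hκ : ∀ ρ ∈ Set.Ico (0 : ℝ) 1,
      hpIntegral p (poissonSeries a) ρ + hpIntegral p (conjPoissonSeries a) ρ ≤ κ)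
    (hr : 1 / 4 ≤ r) (hr1 : r < 1) :
    hpIntegral p (powerSeriesSum a) r ≤ 4 * 12 ^ p * 3 ^ p * κ := by
  have hr₀ : 0 ≤ r := by linarith
  have hr2 : r ^ 2 < 1 := pow_lt_one₀ hr₀ hr1 two_ne_zero
  have mean_le := hκ (r ^ 2) ⟨sq_nonneg r, hr2⟩
  have constant_term_le : ‖a 0‖ₑ ^ p ≤ κ := by
    rw [← poissonSeries_zero a, ← hpIntegral_zero_radius p (poissonSeries a)]
    exact le_self_add.trans (hκ 0 (by simp))
  calc _ ≤ 12 ^ p * (hpIntegral p (evenSeries a) (r ^ 2) + hpIntegral p (oddSeries a) (r ^ 2)) :=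
        hpIntegral_powerSeriesSum_le ha hp hr hr1
    _ ≤ 12 ^ p * (3 ^ p * (κ + κ) + 3 ^ p * (κ + κ)) := by
        gcongr
        · exact (hpIntegral_evenSeries_le ha hp.le (sq_nonneg r) hr2).trans (by gcongr)
        · exact (hpIntegral_oddSeries_le ha hp.le (sq_nonneg r) hr2).trans (by gcongr)
    _ = _ := by ring

end MeanComparison

section QuasiNorms

variable {Y : Type*} [NormedAddCommGroup Y] {p : ℝ} {κ : ℝ≥0∞} {F G : ℂ → Y}

lemma qHpD_congr (h : ∀ z ∈ ball (0 : ℂ) 1, F z = G z) : qHpD p F = qHpD p G := by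
  refine iSup_congr fun r ↦ ?_
  rw [hpIntegral_congr r.2.1 fun z hz ↦ by rw [h z (sphere_subset_ball r.2.2 hz)]]

lemma qHpD_le_iff (hp : 0 < p) :
    qHpD p F ≤ κ ↔ ∀ r ∈ Set.Ico (0 : ℝ) 1, hpIntegral p F r ≤ κ ^ p := by
  simp only [qHpD, iSup_le_iff, Subtype.forall, one_div, rpow_inv_le_iff hp]

variable [NormedSpace ℂ Y]

lemma memHpD_iff_qHpD_lt_top (hp : 0 < p) :
    memHpD p F ↔ DifferentiableOn ℂ F (ball 0 1) ∧ qHpD p F < ⊤ := by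
  refine and_congr_right fun _ ↦ ⟨fun ⟨B, hB, bound⟩ ↦ ?_, fun h ↦ ⟨qHpD p F ^ p, ?_, ?_⟩⟩
  · have : qHpD p F ≤ B ^ p⁻¹ := (qHpD_le_iff hp).2 fun r hr ↦ by
      simpa [rpow_inv_rpow hp.ne'] using bound r hr.1 hr.2
    exact this.trans_lt (rpow_lt_top_of_nonneg (by positivity) hB.ne)
  · exact rpow_lt_top_of_nonneg hp.le h.ne
  · exact fun r hr hr1 ↦ (qHpD_le_iff hp).1 le_rfl r ⟨hr, hr1⟩

variable {u : (ℝ → ℂ) → Y}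

namespace IsPeriodicDistributionC

variable [CompleteSpace Y]

lemma lintegral_pConvC_add_qConvC (hu : IsPeriodicDistributionC u) {r : ℝ} (hr : 0 ≤ r)
    (hr1 : r < 1) (p : ℝ) :
    ∫⁻ t in I₀, ((‖pConvC u r t‖₊ : ℝ≥0∞) ^ p + (‖qConvC u r t‖₊ : ℝ≥0∞) ^ p) =
      hpIntegral p (poissonSeries (distributionCoeff u)) r +
        hpIntegral p (conjPoissonSeries (distributionCoeff u)) r := by
  have measurable_poisson := measurable_enorm_rpow_circlePoint hr
    ((continuousOn_poissonSeries hu.distributionCoeff_mem_polyGrowth).mono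
      (sphere_subset_ball hr1)) p
  rw [hpIntegral_eq_lintegral_addCircle, hpIntegral_eq_lintegral_addCircle,
    ← lintegral_add_left measurable_poisson, ← lintegral_I₀_eq_lintegral_addCircle]
  simp only [hu.pConvC_eq hr hr1, hu.qConvC_eq hr hr1, circlePt_eq_circlePoint, enorm_eq_nnnorm]

lemma qHpT_le_iff (hu : IsPeriodicDistributionC u) (hp : 0 < p) :
    qHpT p u ≤ κ ↔ ∀ r ∈ Set.Ico (0 : ℝ) 1,
      hpIntegral p (poissonSeries (distributionCoeff u)) r +
        hpIntegral p (conjPoissonSeries (distributionCoeff u)) r ≤ κ ^ p := by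
  simp only [qHpT, iSup_le_iff, Subtype.forall, one_div, rpow_inv_le_iff hp]
  exact forall₂_congr fun r hr ↦ by rw [hu.lintegral_pConvC_add_qConvC hr.1 hr.2]

end IsPeriodicDistributionC

variable (Y) [CompleteSpace Y]

lemma exists_qHpT_le_mul_qHpD (hp : 0 < p) : ∃ C < (⊤ : ℝ≥0∞), ∀ u : (ℝ → ℂ) → Y,
    IsPeriodicDistributionC u →
      qHpT p u ≤ C * qHpD p (powerSeriesSum (distributionCoeff u)) := by
  have K_ne_top : 2 * 3 ^ p * (4 * 3 ^ p + 1) ≠ (⊤ : ℝ≥0∞) := by finiteness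
  refine ⟨_, rpow_lt_top_of_nonneg (inv_nonneg.2 hp.le) K_ne_top, fun u hu ↦ ?_⟩
  refine (hu.qHpT_le_iff hp).2 fun r hr ↦ ?_
  rw [mul_rpow_of_nonneg _ _ hp.le, rpow_inv_rpow hp.ne']
  exact hpIntegral_poissonSeries_add_le_of_forall_le hu.distributionCoeff_mem_polyGrowth hp
    ((qHpD_le_iff hp).1 le_rfl) hr.1 hr.2

lemma exists_qHpD_le_mul_qHpT (hp : 0 < p) : ∃ C < (⊤ : ℝ≥0∞), ∀ u : (ℝ → ℂ) → Y,
    IsPeriodicDistributionC u →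
      qHpD p (powerSeriesSum (distributionCoeff u)) ≤ C * qHpT p u := by
  obtain ⟨E, E_ne_top, hE⟩ := exists_hpIntegral_le_of_forall_quarter_le Y hp
  have K_ne_top : E * (4 * 12 ^ p * 3 ^ p) ≠ ⊤ := by finiteness
  refine ⟨_, rpow_lt_top_of_nonneg (inv_nonneg.2 hp.le) K_ne_top, fun u hu ↦ ?_⟩
  have coeff_mem := hu.distributionCoeff_mem_polyGrowth
  refine (qHpD_le_iff hp).2 ?_
  rw [mul_rpow_of_nonneg _ _ hp.le, rpow_inv_rpow hp.ne', mul_assoc]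
  exact hE _ _ (differentiableOn_powerSeriesSum coeff_mem) fun ρ hρ ↦
    hpIntegral_powerSeriesSum_le_of_forall_le coeff_mem hp ((hu.qHpT_le_iff hp).1 le_rfl) hρ.1 hρ.2

end QuasiNorms

section TaylorToFourier

variable (Y : Type*) [NormedAddCommGroup Y] [NormedSpace ℂ Y] [CompleteSpace Y]

/-- The sum of the power series as a linear map from sequences of polynomial growth to functions on
the unit disc. -/
def discSeries : polyGrowth Y →ₗ[ℂ] (ball (0 : ℂ) 1 → Y) where
  toFun a z := powerSeriesSum a.1 z
  map_add' a b := by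
    ext ⟨z, hz⟩
    rw [mem_ball_zero_iff] at hz
    simpa [powerSeriesSum] using
      (hasSum_powerSeriesSum a.2 hz).summable.tsum_add (hasSum_powerSeriesSum b.2 hz).summable
  map_smul' c a := by
    ext ⟨z, hz⟩
    rw [mem_ball_zero_iff] at hz
    simpa [powerSeriesSum, smul_comm _ c] using
      (hasSum_powerSeriesSum a.2 hz).summable.tsum_const_smul c

lemma discSeries_injective : Function.Injective (discSeries Y) := fun a b h ↦
  Subtype.ext (polyGrowth_ext a.2 b.2 fun z hz ↦ congr_fun h ⟨z, hz⟩)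

lemma exists_linearMap_eq_coeffDistribution : ∃ T : (ℂ → Y) →ₗ[ℂ] ((ℝ → ℂ) → Y),
    ∀ (a : polyGrowth Y) (F : ℂ → Y), (∀ z ∈ ball (0 : ℂ) 1, powerSeriesSum a.1 z = F z) →
      T F = coeffDistribution a := by
  obtain ⟨coefficients, leftInverse⟩ := (discSeries Y).exists_leftInverse_of_injective
    (LinearMap.ker_eq_bot.2 (discSeries_injective Y))
  refine ⟨coeffDistribution ∘ₗ coefficients ∘ₗ LinearMap.funLeft ℂ Y Subtype.val,
    fun a F hF ↦ ?_⟩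
  have restriction_eq : LinearMap.funLeft ℂ Y Subtype.val F = discSeries Y a :=
    funext fun z ↦ (hF z z.2).symm
  simp only [LinearMap.comp_apply, restriction_eq]
  exact congr_arg coeffDistribution (LinearMap.congr_fun leftInverse a)

variable {Y}

lemma memHpD.exists_eq_powerSeriesSum {p : ℝ} {F : ℂ → Y} (hp : 0 < p) (hF : memHpD p F) :
    ∃ a : polyGrowth Y, ∀ z ∈ ball (0 : ℂ) 1, powerSeriesSum a.1 z = F z := by
  obtain ⟨N, C, bound⟩ := hF.exists_pow_mul_norm_le hp
  obtain ⟨a, ha, sum_eq⟩ := exists_mem_polyGrowth_eq_powerSeriesSum hF.1 bound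
  exact ⟨⟨a, ha⟩, sum_eq⟩

end TaylorToFourier

theorem HpD_isomorphic_HpT_general {Y : Type*} [NormedAddCommGroup Y] [NormedSpace ℂ Y]
    [CompleteSpace Y] (p : ℝ) (hp : 0 < p) :
    ∃ (T : (ℂ → Y) →ₗ[ℂ] ((ℝ → ℂ) → Y)) (c C : ℝ≥0∞), 0 < c ∧ C < ⊤ ∧
      (∀ F, memHpD p F → memHpT p (T F) ∧
        c * qHpD p F ≤ qHpT p (T F) ∧ qHpT p (T F) ≤ C * qHpD p F) ∧
      (∀ u, memHpT p u → ∃ F, memHpD p F ∧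
        ∀ g, Smooth1PeriodicC g → T F g = u g) := by
  obtain ⟨T, hT⟩ := exists_linearMap_eq_coeffDistribution Y
  obtain ⟨C, hC, qHpT_le⟩ := exists_qHpT_le_mul_qHpD Y hp
  obtain ⟨D, hD, qHpD_le⟩ := exists_qHpD_le_mul_qHpT Y hp
  refine ⟨T, D⁻¹, C, ENNReal.inv_pos.2 hD.ne, hC, fun F hF ↦ ?_, fun u hu ↦ ?_⟩
  · obtain ⟨a, sum_eq⟩ := hF.exists_eq_powerSeriesSum hp
    have distribution := isPeriodicDistributionC_coeffDistribution a
    have upper := qHpT_le _ distribution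
    have lower := qHpD_le _ distribution
    rw [distributionCoeff_coeffDistribution, qHpD_congr sum_eq] at upper lower
    rw [hT a F sum_eq]
    exact ⟨⟨distribution, upper.trans_lt (mul_lt_top hC ((memHpD_iff_qHpD_lt_top hp).1 hF).2)⟩,
      by simpa [mul_comm, div_eq_mul_inv] using ENNReal.div_le_of_le_mul' lower, upper⟩
  · set a : polyGrowth Y := ⟨distributionCoeff u, hu.1.distributionCoeff_mem_polyGrowth⟩
    refine ⟨powerSeriesSum a.1, (memHpD_iff_qHpD_lt_top hp).2
      ⟨differentiableOn_powerSeriesSum a.2, (qHpD_le u hu.1).trans_lt (mul_lt_top hD hu.2)⟩,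
      fun g hg ↦ ?_⟩
    rw [hT a _ fun _ _ ↦ rfl, coeffDistribution_apply a hg, hu.1.apply_eq_tsum hg]

theorem HpD_isomorphic_HpT {X Y : Type*}
    [NormedAddCommGroup X] [NormedSpace ℝ X] [CompleteSpace X]
    [NormedAddCommGroup Y] [NormedSpace ℂ Y] [CompleteSpace Y]
    (ι : X →ₗ[ℝ] Y) (ReY ImY : Y →ₗ[ℝ] X)
    (hdecomp : ∀ y : Y, y = ι (ReY y) + Complex.I • ι (ImY y))
    (hReι : ∀ x, ReY (ι x) = x) (hImι : ∀ x, ImY (ι x) = 0)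
    (hbd : ∃ Cb : ℝ, 0 < Cb ∧ (∀ y, ‖ReY y‖ ≤ Cb * ‖y‖) ∧ (∀ y, ‖ImY y‖ ≤ Cb * ‖y‖) ∧
      ∀ x, ‖ι x‖ ≤ Cb * ‖x‖)
    (p : ℝ) (hp : 0 < p) (hp1 : p ≤ 1) :
    ∃ (T : (ℂ → Y) →ₗ[ℂ] ((ℝ → ℂ) → Y)) (c C : ℝ≥0∞), 0 < c ∧ C < ⊤ ∧
      (∀ F, memHpD p F → memHpT p (T F) ∧
        c * qHpD p F ≤ qHpT p (T F) ∧ qHpT p (T F) ≤ C * qHpD p F) ∧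
      (∀ u, memHpT p u → ∃ F, memHpD p F ∧
        ∀ g, Smooth1PeriodicC g → T F g = u g) :=
  HpD_isomorphic_HpT_general p hp

end
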